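/- arXiv:1002.2922 — 6 statements merged into one kernel-verified Lean document; each statement's English description precedes it below -/
import Mathlib

section
/- Let μ be a nonzero finite positive Borel measure on the interval [0,1] and let M ≥ 1 be an integer. Then there exist real polynomials a and b with deg a ≤ M−1, deg b ≤ M, b not identically zero, all complex roots of b lying in the real interval [0,1], and the coefficient of s^1 in b nonzero, such that F(s) − a(s)/b(s) = O(|s|^{−(2M+1)}) as |s| → ∞ in ℂ. -/
/-!
Write `I = [0,1]`. The denominator `b = ∏_{t ∈ S} (X - t)` is built on a nonempty finite set
`S ⊆ I` of at most `M` nodes such that `b` is `μ`-orthogonal on `I` to every power `X ^ i` with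
`i < k`, where `2M ≤ |S| + k` (`exists_nodes`).

Linear algebra gives `p ≠ 0` of degree at most `M` orthogonal to `1, X, …, X ^ (M - 1)`. If `p`
vanishes `μ`-almost everywhere on `I`, the measure sits on the roots of `p` in `I`; these are the
nodes, and `b = 0` almost everywhere, so any `k` is allowed. Otherwise let `S` be the set of roots
of odd multiplicity of `p` in `I`. The product of `p` with `∏_{t ∈ S} (X - t)` has constant sign on
`I` and does not vanish almost everywhere, so orthogonality forces `|S| ≥ M`; hence `p` is a
constant multiple of `b`, and `k = M` works.

The Cauchy transform of `b`, namely `∫ b(z) / (s - z) dμ(z)`, equals `b(s) F(s) - a(s)` for a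
polynomial `a` of degree less than `|S|` (`exists_numerator`). By orthogonality it also equals
`s⁻ᵏ ∫ zᵏ b(z) / (s - z) dμ(z)`, which is `O(|s| ^ (-k-1))`. Dividing by `b(s)`, of order
`|s| ^ |S|`, gives the error bound (`pade_error`).

Finally, the linear coefficient of `b` is `b'(0)`, a sum of products of `|S| - 1` numbers `-t`. All
these products carry the same sign `(-1) ^ (|S| - 1)` or vanish, and the one omitting `min S` does
not vanish because the nodes are distinct (`coeff_one_nodal_ne_zero`).
-/

open MeasureTheory Polynomial Filter Asymptotics Lagrange

/-! ### Nodal polynomials of finite subsets of the unit interval -/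

section Nodal

lemma coeff_one_nodal_ne_zero (S : Finset ℝ) (hS : S.Nonempty) (h0 : ∀ t ∈ S, 0 ≤ t) :
    (nodal S id).coeff 1 ≠ 0 := by
  classical
  have h1 : (nodal S id).coeff 1 = (derivative (nodal S id)).eval 0 := by
    rw [← coeff_zero_eq_eval_zero, coeff_derivative]
    simp
  have h2 : (derivative (nodal S id)).eval 0
      = (-1) ^ (S.card - 1) * ∑ i ∈ S, ∏ j ∈ S.erase i, j := by
    rw [nodal, derivative_prod_finset, eval_finsetSum, Finset.mul_sum]
    refine Finset.sum_congr rfl fun i hi => ?_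
    rw [← Finset.card_erase_of_mem hi, ← Finset.prod_neg]
    simp [eval_prod]
  have h3 : 0 < ∑ i ∈ S, ∏ j ∈ S.erase i, j := by
    refine Finset.sum_pos'
      (fun i _ => Finset.prod_nonneg fun j hj => h0 j (Finset.mem_of_mem_erase hj))
      ⟨S.min' hS, S.min'_mem hS, Finset.prod_pos fun j hj => ?_⟩
    exact (h0 _ (S.min'_mem hS)).trans_lt (S.min'_lt_of_mem_erase_min' hS hj)
  rw [h1, h2]
  exact mul_ne_zero (pow_ne_zero _ (by norm_num)) h3.ne'

/-- Multiplying `p` by linear factors at distinct roots of `p` in `[0,1]` makes its sign constant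
on `[0,1]`. The set `S` consists of the roots of odd multiplicity: adding a root to the
multiset of roots toggles its membership in `S`. -/
lemma exists_sign_nodes (n : ℕ) : ∀ p : ℝ[X], p ≠ 0 → p.natDegree = n →
    ∃ S : Finset ℝ, (∀ t ∈ S, t ∈ Set.Icc (0:ℝ) 1 ∧ p.IsRoot t) ∧
      ∃ c : ℝ, c ≠ 0 ∧ ∀ z ∈ Set.Icc (0:ℝ) 1, 0 ≤ c * (p * nodal S id).eval z := by
  classical
  induction n with
  | zero =>
    intro p hp hd
    rw [eq_C_of_natDegree_eq_zero hd] at hp ⊢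
    refine ⟨∅, by simp, p.coeff 0, by simpa using hp, fun z _ => ?_⟩
    simpa using mul_self_nonneg _
  | succ n ih =>
    intro p hp hd
    by_cases hr : ∃ t ∈ Set.Icc (0:ℝ) 1, p.IsRoot t
    · obtain ⟨t, ht, hroot⟩ := hr
      obtain ⟨r, rfl⟩ := dvd_iff_isRoot.mpr hroot
      have hr0 : r ≠ 0 := right_ne_zero_of_mul hp
      have hrd : r.natDegree = n := by
        rw [natDegree_mul (X_sub_C_ne_zero t) hr0, natDegree_X_sub_C] at hd
        omega
      obtain ⟨S, hS, c, hc, hpos⟩ := ih r hr0 hrd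
      by_cases htS : t ∈ S
      · refine ⟨S.erase t, fun u hu => ?_, c, hc, fun z hz => ?_⟩
        · obtain ⟨h1, h2⟩ := hS u (Finset.mem_of_mem_erase hu)
          exact ⟨h1, by simp [IsRoot.def.mp h2]⟩
        · have := hpos z hz
          rw [nodal_eq_mul_nodal_erase htS] at this
          convert this using 2
          simp
          ring
      · refine ⟨insert t S, fun u hu => ?_, c, hc, fun z hz => ?_⟩
        · rcases Finset.mem_insert.mp hu with rfl | hu
          · exact ⟨ht, hroot⟩
          · obtain ⟨h1, h2⟩ := hS u hu
            exact ⟨h1, by simp [IsRoot.def.mp h2]⟩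
        · have := mul_nonneg (mul_self_nonneg (z - t)) (hpos z hz)
          rw [nodal_insert_eq_nodal htS]
          refine this.trans_eq ?_
          simp only [eval_mul, eval_sub, eval_X, eval_C, id]
          ring
    · push Not at hr
      refine ⟨∅, by simp, p.eval 0, hr 0 (by simp), fun z hz => ?_⟩
      by_contra! hneg
      rw [nodal_empty, mul_one] at hneg
      have h0 : (0:ℝ) ∈ Set.uIcc (p.eval 0) (p.eval z) := by
        rw [Set.mem_uIcc]
        rcases mul_neg_iff.mp hneg with h | h
        · exact Or.inr ⟨h.2.le, h.1.le⟩
        · exact Or.inl ⟨h.1.le, h.2.le⟩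
      obtain ⟨u, hu, hu0⟩ :=
        intermediate_value_uIcc (a := 0) (b := z) p.continuous.continuousOn h0
      rw [Set.uIcc_of_le hz.1] at hu
      exact hr u ⟨hu.1, hu.2.trans hz.2⟩ hu0

end Nodal

/-! ### Orthogonality and the choice of nodes -/

section Orthogonality

variable (μ : Measure ℝ) [IsFiniteMeasure μ]

lemma integrable_poly (p : ℝ[X]) :
    Integrable (fun z => p.eval z) (μ.restrict (Set.Icc (0:ℝ) 1)) :=
  p.continuous.continuousOn.integrableOn_compact isCompact_Icc

/-- The functional `p ↦ ∫_{[0,1]} p dμ` on real polynomials. -/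
noncomputable def polyInt : ℝ[X] →ₗ[ℝ] ℝ where
  toFun p := ∫ z in Set.Icc (0:ℝ) 1, p.eval z ∂μ
  map_add' p q := by
    simp only [eval_add]
    exact integral_add (integrable_poly μ p) (integrable_poly μ q)
  map_smul' c p := by
    simp only [eval_smul, RingHom.id_apply]
    exact integral_smul c _

lemma polyInt_apply (p : ℝ[X]) : polyInt μ p = ∫ z in Set.Icc (0:ℝ) 1, p.eval z ∂μ := rfl

/-- A nonzero polynomial of degree at most `M` orthogonal to the `M` lowest powers: `M` linear
conditions on a space of dimension `M + 1`. -/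
lemma exists_orthogonal (M : ℕ) : ∃ p : ℝ[X], p ≠ 0 ∧ p.natDegree ≤ M ∧
    ∀ i < M, polyInt μ (X ^ i * p) = 0 := by
  let L : degreeLT ℝ (M + 1) →ₗ[ℝ] (Fin M → ℝ) :=
    LinearMap.pi fun i =>
      (polyInt μ ∘ₗ LinearMap.mulLeft ℝ ((X : ℝ[X]) ^ (i : ℕ))) ∘ₗ (degreeLT ℝ (M + 1)).subtype
  have : FiniteDimensional ℝ (degreeLT ℝ (M + 1)) :=
    (degreeLTEquiv ℝ (M + 1)).symm.finiteDimensional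
  have hL : LinearMap.ker L ≠ ⊥ := by
    apply LinearMap.ker_ne_bot_of_finrank_lt
    rw [(degreeLTEquiv ℝ (M + 1)).finrank_eq]
    simp
  obtain ⟨⟨p, hpd⟩, hp, hp0⟩ := (Submodule.ne_bot_iff _).mp hL
  refine ⟨p, fun h => hp0 (Subtype.ext h), ?_, fun i hi => ?_⟩
  · rw [mem_degreeLT] at hpd
    exact natDegree_le_iff_degree_le.mpr (Order.le_of_lt_succ (by exact_mod_cast hpd))
  · exact congrFun (LinearMap.mem_ker.mp hp) ⟨i, hi⟩

lemma polyInt_mul_eq_zero {M : ℕ} {p : ℝ[X]} (h : ∀ i < M, polyInt μ (X ^ i * p) = 0)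
    {q : ℝ[X]} (hq : q.natDegree < M) : polyInt μ (p * q) = 0 := by
  rw [q.as_sum_range' M hq, Finset.mul_sum, map_sum]
  refine Finset.sum_eq_zero fun i hi => ?_
  have : p * monomial i (q.coeff i) = q.coeff i • (X ^ i * p) := by
    rw [← C_mul_X_pow_eq_monomial, smul_eq_C_mul]
    ring
  rw [this, map_smul, h i (Finset.mem_range.mp hi), smul_zero]

/-- The nodes of the denominator. Either they carry the whole measure, or there are `M` of them
and the nodal polynomial is the orthogonal polynomial of degree `M`. -/
lemma exists_nodes (hμ0 : μ (Set.Icc (0:ℝ) 1) ≠ 0) (M : ℕ) (hM : 1 ≤ M) :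
    ∃ S : Finset ℝ, (∀ t ∈ S, t ∈ Set.Icc (0:ℝ) 1) ∧ S.Nonempty ∧ S.card ≤ M ∧
      ∃ k : ℕ, 2 * M ≤ S.card + k ∧ ∀ i < k, polyInt μ (X ^ i * nodal S id) = 0 := by
  classical
  obtain ⟨p, hp0, hpd, horth⟩ := exists_orthogonal μ M
  have hcard : ∀ S : Finset ℝ, (∀ t ∈ S, p.IsRoot t) → S.card ≤ M := fun S hS =>
    ((card_le_degree_of_subset_roots (p := p) fun t ht =>
      (mem_roots hp0).mpr (hS t ht)).trans hpd)
  by_cases hae : ∀ᵐ z ∂μ.restrict (Set.Icc (0:ℝ) 1), p.eval z = 0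
  · have hmem : ∀ t, t ∈ p.roots.toFinset.filter (· ∈ Set.Icc (0:ℝ) 1) ↔
        p.IsRoot t ∧ t ∈ Set.Icc (0:ℝ) 1 := fun t => by
      rw [Finset.mem_filter, Multiset.mem_toFinset, mem_roots hp0]
    generalize p.roots.toFinset.filter (· ∈ Set.Icc (0:ℝ) 1) = S at hmem
    have hS : ∀ᵐ z ∂μ.restrict (Set.Icc (0:ℝ) 1), z ∈ S := by
      filter_upwards [hae, ae_restrict_mem measurableSet_Icc] with z hz hzI
      exact (hmem z).mpr ⟨hz, hzI⟩
    refine ⟨S, fun t ht => ((hmem t).mp ht).2, ?_,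
      hcard S fun t ht => ((hmem t).mp ht).1, 2 * M, by omega, fun i _ => ?_⟩
    · have : NeZero (μ.restrict (Set.Icc (0:ℝ) 1)) :=
        ⟨fun h => hμ0 (Measure.restrict_eq_zero.mp h)⟩
      exact hS.exists
    · rw [polyInt_apply]
      refine integral_eq_zero_of_ae ?_
      filter_upwards [hS] with z hz
      have : eval z (nodal S id) = 0 := eval_nodal_at_node (v := id) hz
      simp [this]
  · obtain ⟨S, hS, c, hc, hpos⟩ := exists_sign_nodes _ p hp0 rfl
    have hle : S.card ≤ M := hcard S fun t ht => (hS t ht).2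
    have hge : M ≤ S.card := by
      by_contra! hlt
      -- the integrand has constant sign and integral zero, so it vanishes almost everywhere
      have hint := polyInt_mul_eq_zero μ horth (q := nodal S id) (by rwa [natDegree_nodal])
      rw [← smul_eq_zero_iff_right hc, ← map_smul, polyInt_apply,
        integral_eq_zero_iff_of_nonneg_ae ?_ (integrable_poly μ _)] at hint
      · refine hae ?_
        filter_upwards [hint] with z hz
        simp only [eval_smul, smul_eq_mul, eval_mul, Pi.zero_apply, mul_eq_zero, hc,
          false_or] at hz
        rcases hz with hz | hz
        · exact hz
        · rw [eval_nodal, Finset.prod_eq_zero_iff] at hz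
          obtain ⟨t, ht, hzt⟩ := hz
          rw [sub_eq_zero.mp hzt]
          exact (hS t ht).2
      · filter_upwards [ae_restrict_mem measurableSet_Icc] with z hz
        simpa using hpos z hz
    have hSM : S.card = M := le_antisymm hle hge
    have hdvd : nodal S id ∣ p := by
      refine Finset.prod_dvd_of_coprime
        (fun a _ b _ hab => pairwise_coprime_X_sub_C Function.injective_id hab) fun t ht =>
          dvd_iff_isRoot.mpr (hS t ht).2
    have hp : p = C p.leadingCoeff * nodal S id :=
      eq_leadingCoeff_mul_of_monic_of_dvd_of_natDegree_le nodal_monic hdvd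
        (by rw [natDegree_nodal, hSM]; exact hpd)
    refine ⟨S, fun t ht => (hS t ht).1, Finset.card_pos.mp (by omega), hle, M, by omega,
      fun i hi => ?_⟩
    have h := horth i hi
    have e : X ^ i * p = p.leadingCoeff • (X ^ i * nodal S id) := by
      conv_lhs => rw [hp]
      rw [smul_eq_C_mul]
      ring
    rw [e, map_smul] at h
    exact (smul_eq_zero_iff_right (leadingCoeff_ne_zero.mpr hp0)).mp h

end Orthogonality

/-! ### Cauchy transforms and the error bound -/

section Cauchy

variable (μ : Measure ℝ) [IsFiniteMeasure μ]

/-- The Cauchy transform `s ↦ ∫_{[0,1]} q(z) / (s - z) dμ(z)` of the measure `q dμ`. -/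
noncomputable def cauchyInt (q : ℝ[X]) (s : ℂ) : ℂ :=
  ∫ z in Set.Icc (0:ℝ) 1, ((q.eval z : ℝ) : ℂ) * (s - (z : ℂ))⁻¹ ∂μ

lemma sub_ne_zero_of_one_lt {s : ℂ} (hs : 1 < ‖s‖) {z : ℝ} (hz : z ∈ Set.Icc (0:ℝ) 1) :
    s - (z : ℂ) ≠ 0 := by
  intro h
  rw [sub_eq_zero.mp h, Complex.norm_real, Real.norm_of_nonneg hz.1] at hs
  exact hs.not_ge hz.2

lemma integrable_cauchy (q : ℝ[X]) {s : ℂ} (hs : 1 < ‖s‖) :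
    Integrable (fun z : ℝ => ((q.eval z : ℝ) : ℂ) * (s - (z : ℂ))⁻¹)
      (μ.restrict (Set.Icc (0:ℝ) 1)) := by
  refine ContinuousOn.integrableOn_compact isCompact_Icc
    (ContinuousOn.mul ?_ (ContinuousOn.inv₀ ?_ ?_))
  · exact (Complex.continuous_ofReal.comp q.continuous).continuousOn
  · fun_prop
  · exact fun z hz => sub_ne_zero_of_one_lt hs hz

/-- The recursion behind both the numerator and the decay of the error, from
`(z - t) / (s - z) = (s - t) / (s - z) - 1`. -/
lemma cauchyInt_X_sub_C_mul (q : ℝ[X]) (t : ℝ) {s : ℂ} (hs : 1 < ‖s‖) :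
    cauchyInt μ ((X - C t) * q) s = (s - t) * cauchyInt μ q s - (polyInt μ q : ℝ) := by
  have hq : Integrable (fun z => ((q.eval z : ℝ) : ℂ)) (μ.restrict (Set.Icc (0:ℝ) 1)) :=
    (integrable_poly μ q).ofReal
  rw [cauchyInt, cauchyInt, polyInt_apply, ← integral_complex_ofReal, ← integral_const_mul,
    ← integral_sub ((integrable_cauchy μ q hs).const_mul _) hq]
  refine setIntegral_congr_fun measurableSet_Icc fun z hz => ?_
  have := sub_ne_zero_of_one_lt hs hz
  simp only [eval_mul, eval_sub, eval_X, eval_C, Complex.ofReal_mul, Complex.ofReal_sub]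
  field_simp
  ring

lemma exists_numerator (S : Finset ℝ) : ∃ a : ℝ[X], a.degree < S.card ∧ ∀ s : ℂ, 1 < ‖s‖ →
    cauchyInt μ (nodal S id) s = aeval s (nodal S id) * cauchyInt μ 1 s - aeval s a := by
  classical
  induction S using Finset.induction_on with
  | empty => exact ⟨0, by simp, by simp⟩
  | insert t S ht ih =>
    obtain ⟨a, had, ha⟩ := ih
    refine ⟨(X - C t) * a + C (polyInt μ (nodal S id)), ?_, fun s hs => ?_⟩
    · rw [← mem_degreeLT, Finset.card_insert_of_notMem ht]
      refine Submodule.add_mem _ (mem_degreeLT.mpr ?_) (mem_degreeLT.mpr ?_)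
      · rcases eq_or_ne a 0 with rfl | ha0
        · simp
        · rw [degree_eq_natDegree ha0] at had
          rw [degree_mul, degree_X_sub_C, degree_eq_natDegree ha0]
          norm_cast at had ⊢
          omega
      · refine degree_C_le.trans_lt ?_
        norm_cast
        omega
    · rw [nodal_insert_eq_nodal ht, id, cauchyInt_X_sub_C_mul μ _ t hs, ha s hs]
      simp
      ring

lemma pow_mul_cauchyInt {b : ℝ[X]} {s : ℂ} (hs : 1 < ‖s‖) (k : ℕ)
    (h : ∀ i < k, polyInt μ (X ^ i * b) = 0) :
    s ^ k * cauchyInt μ b s = cauchyInt μ (X ^ k * b) s := by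
  induction k with
  | zero => simp
  | succ k ih =>
    have e : X ^ (k + 1) * b = (X - C 0) * (X ^ k * b) := by
      rw [C_0, sub_zero]
      ring
    rw [e, cauchyInt_X_sub_C_mul μ _ _ hs, h k k.lt_succ_self,
      ← ih fun i hi => h i (hi.trans k.lt_succ_self)]
    simp
    ring

lemma half_norm_le {s : ℂ} (hs : 2 ≤ ‖s‖) {z : ℝ} (hz : z ∈ Set.Icc (0:ℝ) 1) :
    ‖s‖ / 2 ≤ ‖s - (z : ℂ)‖ := by
  have h1 := norm_sub_norm_le s (z : ℂ)
  rw [Complex.norm_real, Real.norm_of_nonneg hz.1] at h1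
  linarith [hz.2]

lemma exists_cauchyInt_bound (q : ℝ[X]) :
    ∃ K : ℝ, 0 ≤ K ∧ ∀ s : ℂ, 2 ≤ ‖s‖ → ‖cauchyInt μ q s‖ ≤ K * ‖s‖⁻¹ := by
  obtain ⟨B, hB⟩ := (isCompact_Icc (a := (0:ℝ)) (b := 1)).exists_bound_of_continuousOn
    q.continuous.continuousOn
  have hB0 : 0 ≤ B := (norm_nonneg _).trans (hB 0 (by simp))
  refine ⟨B * 2 * μ.real (Set.Icc 0 1), by positivity, fun s hs => ?_⟩
  have hs0 : 0 < ‖s‖ := by linarith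
  have : ‖cauchyInt μ q s‖ ≤ (B * (‖s‖ / 2)⁻¹) * μ.real (Set.Icc 0 1) := by
    refine norm_setIntegral_le_of_norm_le_const (measure_lt_top _ _) fun z hz => ?_
    rw [norm_mul, norm_inv, Complex.norm_real]
    gcongr
    · exact hB z hz
    · exact half_norm_le hs hz
  refine this.trans_eq ?_
  field_simp

lemma half_norm_pow_le (S : Finset ℝ) (hS : ∀ t ∈ S, t ∈ Set.Icc (0:ℝ) 1) {s : ℂ}
    (hs : 2 ≤ ‖s‖) : (‖s‖ / 2) ^ S.card ≤ ‖aeval s (nodal S id)‖ := by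
  rw [nodal, map_prod, norm_prod, ← Finset.prod_const]
  refine Finset.prod_le_prod (fun _ _ => by positivity) fun t ht => ?_
  simpa using half_norm_le hs (hS t ht)

lemma pade_error (S : Finset ℝ) (hS : ∀ t ∈ S, t ∈ Set.Icc (0:ℝ) 1) {M k : ℕ}
    (hk : 2 * M ≤ S.card + k) (horth : ∀ i < k, polyInt μ (X ^ i * nodal S id) = 0) {a : ℝ[X]}
    (ha : ∀ s : ℂ, 1 < ‖s‖ →
      cauchyInt μ (nodal S id) s = aeval s (nodal S id) * cauchyInt μ 1 s - aeval s a) :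
    (fun s : ℂ => cauchyInt μ 1 s - aeval s a / aeval s (nodal S id))
      =O[cocompact ℂ] fun s : ℂ => ‖s‖⁻¹ ^ (2 * M + 1) := by
  obtain ⟨K, hK0, hK⟩ := exists_cauchyInt_bound μ (X ^ k * nodal S id)
  refine IsBigO.of_bound (2 ^ S.card * K) ?_
  filter_upwards [tendsto_norm_cocompact_atTop.eventually_ge_atTop (2:ℝ)] with s hs
  have hs1 : 1 < ‖s‖ := by linarith
  have hs0 : s ≠ 0 := norm_pos_iff.mp (by linarith)
  have hn0 : 0 < ‖s‖ := by linarith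
  have hb := half_norm_pow_le S hS hs
  have hb0 : aeval s (nodal S id) ≠ 0 :=
    norm_pos_iff.mp (lt_of_lt_of_le (by positivity) hb)
  have e : cauchyInt μ 1 s - aeval s a / aeval s (nodal S id)
      = (aeval s (nodal S id))⁻¹ * ((s ^ k)⁻¹ * cauchyInt μ (X ^ k * nodal S id) s) := by
    rw [← pow_mul_cauchyInt μ hs1 k horth, ha s hs1]
    field_simp
  rw [e, norm_mul, norm_mul, norm_inv, norm_inv, norm_pow, norm_pow, norm_inv, norm_norm]
  calc _ ≤ ((‖s‖ / 2) ^ S.card)⁻¹ * ((‖s‖ ^ k)⁻¹ * (K * ‖s‖⁻¹)) := by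
        gcongr
        exact hK s hs
    _ = 2 ^ S.card * K * ‖s‖⁻¹ ^ (S.card + k + 1) := by
        rw [div_pow, inv_div, pow_succ, pow_add, inv_pow, inv_pow]
        ring
    _ ≤ 2 ^ S.card * K * ‖s‖⁻¹ ^ (2 * M + 1) := by
        gcongr ?_ * ?_
        exact pow_le_pow_of_le_one (by positivity) (inv_le_one_of_one_le₀ hs1.le) (by omega)

end Cauchy

/-! ### Existence of the approximants -/

/-- **Nonstandard Padé approximants for the Stieltjes function `F`.**
For any nonzero finite positive Borel measure `μ` on `[0,1]` and any `M ≥ 1`, there exist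
real polynomials `a`, `b` with `deg a ≤ M-1`, `deg b ≤ M`, `b ≠ 0`, all complex roots of `b`
lying in the real interval `[0,1]`, and the linear coefficient of `b` nonzero, such that
`F(s) - a(s)/b(s) = O(|s|^{-(2M+1)})` as `|s| → ∞` in `ℂ`. -/
theorem nonstandard_pade_exists
    (μ : Measure ℝ) [IsFiniteMeasure μ] (hμ0 : μ (Set.Icc (0:ℝ) 1) ≠ 0)
    (M : ℕ) (hM : 1 ≤ M) :
    ∃ a b : Polynomial ℝ,
      a.natDegree ≤ M - 1 ∧
      b.natDegree ≤ M ∧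
      b ≠ 0 ∧
      (∀ w : ℂ, Polynomial.aeval w b = 0 → ∃ t ∈ Set.Icc (0:ℝ) 1, (t : ℂ) = w) ∧
      b.coeff 1 ≠ 0 ∧
      (fun s : ℂ =>
          (∫ z in Set.Icc (0:ℝ) 1, (s - (z : ℂ))⁻¹ ∂μ) -
            Polynomial.aeval s a / Polynomial.aeval s b)
        =O[Filter.cocompact ℂ] fun s : ℂ => ‖s‖⁻¹ ^ (2 * M + 1) := by
  obtain ⟨S, hS, hne, hcard, k, hk, horth⟩ := exists_nodes μ hμ0 M hM
  obtain ⟨a, had, ha⟩ := exists_numerator μ S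
  refine ⟨a, nodal S id, ?_, by rwa [natDegree_nodal], nodal_ne_zero, fun w hw => ?_,
    coeff_one_nodal_ne_zero S hne fun t ht => (hS t ht).1, ?_⟩
  · rcases eq_or_ne a 0 with rfl | ha0
    · simp
    · rw [degree_eq_natDegree ha0] at had
      norm_cast at had
      omega
  · rw [nodal, map_prod, Finset.prod_eq_zero_iff] at hw
    obtain ⟨t, ht, hwt⟩ := hw
    exact ⟨t, hS t ht, by simpa [sub_eq_zero, eq_comm] using hwt⟩
  · simpa [cauchyInt] using pade_error μ S hS hk horth ha
end

section
/- Let μ be a nonzero finite positive Borel measure on the interval [0,1] and let M ≥ 1 be an integer. Then there exist an integer K with 1 ≤ K ≤ M, distinct points s_1,…,s_K ∈ [0,1], and positive reals A_1,…,A_K with Σ_{i=1}^K A_i = μ([0,1]), such that F(s) − Σ_{i=1}^K A_i/(s−s_i) = O(|s|^{−(2M+1)}) as |s| → ∞ in ℂ. -/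
/-!
The nodes and residues come from the spectral theorem. On `L²(μ)` multiplication by the coordinate
`z` is a symmetric operator `T` with `0 ≤ T ≤ 1`, and the moments are `⟪Tⁿ 1, 1⟫`. Let `S` be the
compression of `T` to the Krylov space `V = span {1, T 1, …, T^(M-1) 1}`, of dimension at most `M`.
Then `Sᵏ 1 = Tᵏ 1` for `k < M`, and moving half of the factors across the inner product gives
`⟪Sⁿ 1, 1⟫ = ⟪Tⁿ 1, 1⟫` for all `n < 2M`. Diagonalizing `S` turns the left side into
`∑ wᵢ λᵢⁿ` with `λᵢ ∈ [0,1]` and `wᵢ ≥ 0` (`exists_moments_of_isSymmetric`). This is Gauss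
quadrature, and it needs no separate treatment of a `μ` supported on fewer than `M` points: then
`V` just has smaller dimension. Merging equal `λᵢ` and discarding zero weights gives the distinct
nodes with positive residues (`exists_merge`).

Since the moments of order below `2M` agree, the geometric expansion of `(x - z)⁻¹` with its
remainder of size `O(|x|^{-(2M+1)})`, uniform in `z ∈ [0,1]` (`norm_inv_sub_sub_sum_le`), gives the
asymptotic statement.
-/

open MeasureTheory Filter Asymptotics
open scoped InnerProductSpace ENNReal

/-- Gauss quadrature for a symmetric operator: the moments of order below `2M` of `T` at `v` are
those of a nonnegative combination of at most `M` point masses, namely the spectral measure of the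
compression of `T` to the Krylov space spanned by `T^k v`, `k < M`. -/
theorem exists_moments_of_isSymmetric {H : Type*} [NormedAddCommGroup H] [InnerProductSpace ℝ H]
    (T : H →ₗ[ℝ] H) (hT : T.IsSymmetric) (h0 : ∀ x, 0 ≤ ⟪T x, x⟫_ℝ)
    (h1 : ∀ x, ⟪T x, x⟫_ℝ ≤ ⟪x, x⟫_ℝ) (v : H) (M : ℕ) (hM : 1 ≤ M) :
    ∃ d ≤ M, ∃ l w : Fin d → ℝ, (∀ i, l i ∈ Set.Icc (0 : ℝ) 1) ∧ (∀ i, 0 ≤ w i) ∧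
      ∀ n < 2 * M, ∑ i, w i * l i ^ n = ⟪(T ^ n) v, v⟫_ℝ := by
  set V : Submodule ℝ H := Submodule.span ℝ (Set.range fun k : Fin M => (T ^ (k : ℕ)) v) with hV
  have hmem : ∀ k < M, (T ^ k) v ∈ V := fun k hk => Submodule.subset_span ⟨⟨k, hk⟩, rfl⟩
  have : FiniteDimensional ℝ V := FiniteDimensional.span_of_finite ℝ (Set.finite_range _)
  have hdim : Module.finrank ℝ V ≤ M :=
    (finrank_range_le_card (R := ℝ) fun k : Fin M => (T ^ (k : ℕ)) v).trans_eq
      (Fintype.card_fin M)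
  let S : V →ₗ[ℝ] V := V.orthogonalProjectionOnto.toLinearMap ∘ₗ T ∘ₗ V.subtype
  have hSin : ∀ x y : V, ⟪S x, y⟫_ℝ = ⟪T x, (y : H)⟫_ℝ := fun x y =>
    V.inner_orthogonalProjectionOnto_eq_of_mem_right y (T x)
  have hS : S.IsSymmetric := fun x y => by
    rw [hSin, hT, real_inner_comm, real_inner_comm (S y), hSin]
  let v' : V := ⟨v, hmem 0 hM⟩
  have hpow : ∀ k < M, (((S ^ k) v' : V) : H) = (T ^ k) v := by
    intro k
    induction k with
    | zero => intro _; rfl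
    | succ k ih =>
      intro hk
      have := ih (by omega)
      rw [pow_succ', pow_succ', Module.End.mul_apply, Module.End.mul_apply, ← this]
      have hm : T ((S ^ k) v' : V) ∈ V := by
        rw [this, ← Module.End.mul_apply, ← pow_succ']
        exact hmem _ hk
      exact congrArg Subtype.val (V.orthogonalProjectionOnto_mem_subspace_eq_self ⟨_, hm⟩)
  have hmom : ∀ n < 2 * M, ⟪(S ^ n) v', v'⟫_ℝ = ⟪(T ^ n) v, v⟫_ℝ := by
    intro n hn
    -- Writing `n` as `2j` or `2j + 1` with `j < M`, symmetry leaves only `S^j v' = T^j v` and at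
    -- most one further factor, for which `⟪S x, x⟫ = ⟪T x, x⟫` on `V`.
    obtain ⟨j, rfl | rfl⟩ := Nat.even_or_odd' n
    · rw [two_mul, pow_add, pow_add, Module.End.mul_apply, Module.End.mul_apply, hS.pow j,
        hT.pow j, Submodule.coe_inner, hpow j (by omega)]
    · rw [show 2 * j + 1 = j + (1 + j) by ring, pow_add, pow_add, pow_add, pow_add, pow_one,
        pow_one]
      simp only [Module.End.mul_apply]
      rw [hS.pow j, hT.pow j, hSin, hpow j (by omega)]
  let b := hS.eigenvectorBasis rfl
  have hb : ∀ i, S (b i) = hS.eigenvalues rfl i • b i := fun i =>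
    hS.apply_eigenvectorBasis rfl i
  have hlam : ∀ i, hS.eigenvalues rfl i = ⟪T (b i), (b i : H)⟫_ℝ := by
    intro i
    rw [← hSin, hb, real_inner_smul_left, real_inner_self_eq_norm_sq, b.norm_eq_one]
    simp
  refine ⟨_, hdim, hS.eigenvalues rfl, fun i => ⟪v', b i⟫_ℝ ^ 2, fun i => ⟨?_, ?_⟩,
    fun i => sq_nonneg _, fun n hn => ?_⟩
  · rw [hlam]; exact h0 _
  · rw [hlam]
    refine (h1 _).trans ?_
    rw [← Submodule.coe_inner, real_inner_self_eq_norm_sq, b.norm_eq_one]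
    simp
  · rw [← hmom n hn, ← b.sum_inner_mul_inner]
    refine Finset.sum_congr rfl fun i _ => ?_
    rw [hS.pow n, (hS.hasEigenvector_eigenvectorBasis rfl i).pow_apply n, real_inner_smul_right,
      real_inner_comm v' (b i)]
    simp only [RCLike.ofReal_real_eq_id, id, b]
    ring

/-- A nonnegative combination of point masses can be rewritten with distinct nodes and positive
weights. -/
theorem exists_merge {d : ℕ} (l w : Fin d → ℝ) (hw : ∀ i, 0 ≤ w i) :
    ∃ K ≤ d, ∃ s A : Fin K → ℝ, Function.Injective s ∧ (∀ i, ∃ j, s i = l j) ∧ (∀ i, 0 < A i) ∧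
      ∀ n : ℕ, ∑ i, A i * s i ^ n = ∑ i, w i * l i ^ n := by
  classical
  set I : Finset (Fin d) := Finset.univ.filter fun i => w i ≠ 0 with hI
  set s := (I.image l).orderEmbOfFin rfl with hs
  have hsI : ∀ i, ∃ j ∈ I, l j = s i := fun i =>
    Finset.mem_image.1 (Finset.orderEmbOfFin_mem _ rfl i)
  refine ⟨(I.image l).card, ?_, s, fun i => ∑ j ∈ I with l j = s i, w j, s.injective,
    fun i => ?_, fun i => ?_, fun n => ?_⟩
  · exact Finset.card_image_le.trans ((Finset.card_le_univ _).trans (by simp))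
  · obtain ⟨j, -, hj⟩ := hsI i
    exact ⟨j, hj.symm⟩
  · obtain ⟨j, hj, hji⟩ := hsI i
    refine Finset.sum_pos (fun k hk => ?_) ⟨j, by simp [hj, hji]⟩
    simp only [hI, Finset.mem_filter, Finset.mem_univ, true_and] at hk
    exact lt_of_le_of_ne (hw k) (Ne.symm hk.1)
  · have h2 : ∑ i, w i * l i ^ n = ∑ i ∈ I, w i * l i ^ n := by
      refine (Finset.sum_subset (Finset.subset_univ _) fun i _ hi => ?_).symm
      have : w i = 0 := by simpa [hI] using hi
      simp [this]
    have h3 : ∑ i, (∑ j ∈ I with l j = s i, w j) * s i ^ n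
        = ∑ y ∈ I.image l, (∑ j ∈ I with l j = y, w j) * y ^ n := by
      conv_rhs => rw [← Finset.map_orderEmbOfFin_univ (I.image l) rfl, Finset.sum_map]
      rfl
    rw [h2, h3, ← Finset.sum_fiberwise_of_maps_to fun i hi => Finset.mem_image_of_mem l hi]
    refine Finset.sum_congr rfl fun y _ => ?_
    rw [Finset.sum_mul]
    refine Finset.sum_congr rfl fun j hj => ?_
    rw [(Finset.mem_filter.1 hj).2]

/-- The moments of order below `2M` of a finite measure on `[0,1]` are those of at most `M` point
masses in `[0,1]`. -/
theorem exists_quadrature (ν : Measure ℝ) [IsFiniteMeasure ν]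
    (hν : ∀ᵐ z ∂ν, z ∈ Set.Icc (0 : ℝ) 1) (M : ℕ) (hM : 1 ≤ M) :
    ∃ K ≤ M, ∃ s A : Fin K → ℝ, Function.Injective s ∧ (∀ i, s i ∈ Set.Icc (0 : ℝ) 1) ∧
      (∀ i, 0 < A i) ∧ ∀ n < 2 * M, ∑ i, A i * s i ^ n = ∫ z, z ^ n ∂ν := by
  have hid : MemLp (fun z : ℝ => z) ∞ ν := by
    refine memLp_top_of_bound measurable_id.aestronglyMeasurable 1 ?_
    filter_upwards [hν] with z hz
    rw [Real.norm_eq_abs, abs_of_nonneg hz.1]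
    exact hz.2
  have hone : MemLp (fun _ : ℝ => (1 : ℝ)) 2 ν := memLp_const 1
  -- Multiplication by the coordinate, which lies in `L^∞` because `ν` lives on `[0,1]`.
  let T : Lp ℝ 2 ν →ₗ[ℝ] Lp ℝ 2 ν :=
    (ContinuousLinearMap.mul ℝ ℝ).holderₗ ν ∞ 2 2 (hid.toLp _)
  have hT : ∀ g, T g =ᵐ[ν] fun z => z * g z := by
    intro g
    filter_upwards [(ContinuousLinearMap.mul ℝ ℝ).coeFn_holder (r := 2) (hid.toLp _) g,
      hid.coeFn_toLp] with z h1 h2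
    exact h1.trans (by simp [h2])
  have hTin : ∀ f g, ⟪T f, g⟫_ℝ = ∫ z, z * (f z * g z) ∂ν := by
    intro f g
    rw [L2.inner_def]
    refine integral_congr_ae ?_
    filter_upwards [hT f] with z h
    simp only [h, RCLike.inner_apply, conj_trivial]
    ring
  have hin : ∀ f g : Lp ℝ 2 ν, ⟪f, g⟫_ℝ = ∫ z, f z * g z ∂ν := by
    intro f g
    rw [L2.inner_def]
    simp [mul_comm]
  have hint : ∀ f g : Lp ℝ 2 ν, Integrable (fun z => f z * g z) ν := fun f g => by
    simpa [mul_comm] using L2.integrable_inner (𝕜 := ℝ) f g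
  have hintT : ∀ f g : Lp ℝ 2 ν, Integrable (fun z => z * (f z * g z)) ν := fun f g => by
    refine (hint (T f) g).congr ?_
    filter_upwards [hT f] with z h
    rw [h]; ring
  have hpow : ∀ n : ℕ, (T ^ n) (hone.toLp _) =ᵐ[ν] fun z => z ^ n := by
    intro n
    induction n with
    | zero => simpa using hone.coeFn_toLp
    | succ n ih =>
      rw [pow_succ', Module.End.mul_apply]
      filter_upwards [hT ((T ^ n) (hone.toLp _)), ih] with z h1 h2
      rw [h1, h2, pow_succ']
  obtain ⟨d, hd, l, w, hl, hw, hm⟩ := exists_moments_of_isSymmetric T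
    (fun f g => by
      rw [hTin, real_inner_comm, hTin]
      simp only [mul_comm])
    (fun f => by
      rw [hTin]
      refine integral_nonneg_of_ae ?_
      filter_upwards [hν] with z hz
      exact mul_nonneg hz.1 (mul_self_nonneg _))
    (fun f => by
      rw [hTin, hin]
      refine integral_mono_ae (hintT f f) (hint f f) ?_
      filter_upwards [hν] with z hz
      exact mul_le_of_le_one_left (mul_self_nonneg _) hz.2)
    (hone.toLp _) M hM
  obtain ⟨K, hK, s, A, hs, hsl, hA, hsum⟩ := exists_merge l w hw
  refine ⟨K, hK.trans hd, s, A, hs, fun i => ?_, hA, fun n hn => ?_⟩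
  · obtain ⟨j, hj⟩ := hsl i
    rw [hj]; exact hl j
  · rw [hsum, hm n hn, hin]
    refine integral_congr_ae ?_
    filter_upwards [hpow n, hone.coeFn_toLp] with z h1 h2
    rw [h1, h2, mul_one]

/-- The remainder of the geometric expansion of `(x - z)⁻¹` in powers of `x⁻¹`. -/
theorem norm_inv_sub_sub_sum_le (N : ℕ) {x z : ℂ} (hx : 2 ≤ ‖x‖) (hz : ‖z‖ ≤ 1) :
    ‖(x - z)⁻¹ - ∑ n ∈ Finset.range N, z ^ n * x⁻¹ ^ (n + 1)‖ ≤ 2 * ‖x‖⁻¹ ^ (N + 1) := by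
  have hx0 : x ≠ 0 := norm_pos_iff.1 (by linarith)
  have hlow : ‖x‖ / 2 ≤ ‖x - z‖ := by
    have := norm_sub_norm_le x z
    linarith
  have hxz : x - z ≠ 0 := norm_pos_iff.1 (by linarith)
  have key : (x - z)⁻¹ - ∑ n ∈ Finset.range N, z ^ n * x⁻¹ ^ (n + 1)
      = z ^ N * x⁻¹ ^ N * (x - z)⁻¹ := by
    induction N with
    | zero => simp
    | succ N ih =>
      rw [Finset.sum_range_succ, ← sub_sub, ih]
      have h : (x - z)⁻¹ - x⁻¹ = z * x⁻¹ * (x - z)⁻¹ := by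
        field_simp
        ring
      linear_combination z ^ N * x⁻¹ ^ N * h
  rw [key, norm_mul, norm_mul, norm_pow, norm_pow, norm_inv, norm_inv]
  have h1 : ‖x - z‖⁻¹ ≤ 2 * ‖x‖⁻¹ := by
    calc ‖x - z‖⁻¹ ≤ (‖x‖ / 2)⁻¹ := inv_anti₀ (by linarith) hlow
      _ = 2 * ‖x‖⁻¹ := by rw [inv_div, div_eq_mul_inv]
  calc ‖z‖ ^ N * ‖x‖⁻¹ ^ N * ‖x - z‖⁻¹ ≤ 1 * ‖x‖⁻¹ ^ N * (2 * ‖x‖⁻¹) := by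
        gcongr
        exact pow_le_one₀ (norm_nonneg _) hz
    _ = 2 * ‖x‖⁻¹ ^ (N + 1) := by ring

/-- For any nonzero finite positive Borel measure `μ` on `[0,1]` and any `M ≥ 1`, there exist
`1 ≤ K ≤ M`, distinct points `s₁, …, s_K ∈ [0,1]` and positive residues `A₁, …, A_K` summing
to `μ([0,1])`, such that `F(s) - ∑ᵢ Aᵢ/(s - sᵢ) = O(|s|^{-(2M+1)})` as `|s| → ∞` in `ℂ`. -/
theorem pade_partial_fraction_exists
    (μ : Measure ℝ) [IsFiniteMeasure μ] (hμ0 : μ (Set.Icc (0:ℝ) 1) ≠ 0)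
    (M : ℕ) (hM : 1 ≤ M) :
    ∃ (K : ℕ), 1 ≤ K ∧ K ≤ M ∧
      ∃ (s : Fin K → ℝ) (A : Fin K → ℝ),
        Function.Injective s ∧
        (∀ i, s i ∈ Set.Icc (0:ℝ) 1) ∧
        (∀ i, 0 < A i) ∧
        (∑ i, A i) = (μ (Set.Icc (0:ℝ) 1)).toReal ∧
        (fun x : ℂ =>
            (∫ z in Set.Icc (0:ℝ) 1, (x - (z : ℂ))⁻¹ ∂μ) -
              ∑ i, (A i : ℂ) / (x - (s i : ℂ)))
          =O[Filter.cocompact ℂ] fun x : ℂ => ‖x‖⁻¹ ^ (2 * M + 1) := by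
  set ν := μ.restrict (Set.Icc (0 : ℝ) 1) with hνdef
  have hν : ∀ᵐ z ∂ν, z ∈ Set.Icc (0 : ℝ) 1 := ae_restrict_mem measurableSet_Icc
  obtain ⟨K, hKM, s, A, hs, hsI, hA, hm⟩ := exists_quadrature ν hν M hM
  have hsumA : (∑ i, A i) = (μ (Set.Icc (0:ℝ) 1)).toReal := by
    have := hm 0 (by omega)
    simpa [hνdef, Measure.real] using this
  have hpos : 0 < (μ (Set.Icc (0:ℝ) 1)).toReal :=
    ENNReal.toReal_pos hμ0 (measure_ne_top _ _)
  refine ⟨K, ?_, hKM, s, A, hs, hsI, hA, hsumA, ?_⟩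
  · rcases Nat.eq_zero_or_pos K with rfl | h
    · simp at hsumA
      linarith
    · exact h
  have hnorm : ∀ z ∈ Set.Icc (0 : ℝ) 1, ‖(z : ℂ)‖ ≤ 1 := fun z hz => by
    rw [Complex.norm_real, Real.norm_eq_abs, abs_of_nonneg hz.1]
    exact hz.2
  refine IsBigO.of_bound (4 * (μ (Set.Icc (0:ℝ) 1)).toReal) ?_
  filter_upwards [tendsto_norm_cocompact_atTop.eventually_ge_atTop 2] with x hx
  -- Both sides integrate `P` to the same value, so only the remainders contribute.
  let P : ℝ → ℂ := fun z => ∑ n ∈ Finset.range (2 * M), (z : ℂ) ^ n * x⁻¹ ^ (n + 1)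
  have hbd : ∀ z ∈ Set.Icc (0 : ℝ) 1, ‖(x - (z : ℂ))⁻¹ - P z‖ ≤ 2 * ‖x‖⁻¹ ^ (2 * M + 1) :=
    fun z hz => norm_inv_sub_sub_sum_le (2 * M) hx (hnorm z hz)
  have hpowint : ∀ n : ℕ, Integrable (fun z : ℝ => (z : ℂ) ^ n * x⁻¹ ^ (n + 1)) ν := fun n =>
    Continuous.integrableOn_Icc (by fun_prop)
  have hPint : Integrable P ν := integrable_finsetSum _ fun n _ => hpowint n
  have hRint : Integrable (fun z : ℝ => (x - (z : ℂ))⁻¹ - P z) ν := by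
    refine Integrable.of_bound (Measurable.aestronglyMeasurable (by fun_prop))
      (2 * ‖x‖⁻¹ ^ (2 * M + 1)) ?_
    filter_upwards [hν] with z hz using hbd z hz
  have hF : ∫ z, (x - (z : ℂ))⁻¹ ∂ν = (∫ z, ((x - (z : ℂ))⁻¹ - P z) ∂ν) + ∫ z, P z ∂ν := by
    rw [← integral_add hRint hPint]
    simp
  have hP : ∫ z, P z ∂ν = ∑ i, (A i : ℂ) * P (s i) := by
    have h1 : ∀ n ∈ Finset.range (2 * M), ∫ z : ℝ, (z : ℂ) ^ n * x⁻¹ ^ (n + 1) ∂ν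
        = ∑ i, (A i : ℂ) * ((s i : ℂ) ^ n * x⁻¹ ^ (n + 1)) := by
      intro n hn
      rw [integral_mul_const]
      have h2 : ∫ z : ℝ, (z : ℂ) ^ n ∂ν = ((∫ z, z ^ n ∂ν : ℝ) : ℂ) := by
        rw [← integral_complex_ofReal]
        simp
      rw [h2, ← hm n (Finset.mem_range.1 hn)]
      push_cast
      rw [Finset.sum_mul]
      simp only [mul_assoc]
    simp only [P]
    rw [integral_finsetSum _ fun n _ => hpowint n, Finset.sum_congr rfl h1, Finset.sum_comm]
    simp only [Finset.mul_sum]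
  have hdiff : (∫ z, (x - (z : ℂ))⁻¹ ∂ν) - ∑ i, (A i : ℂ) / (x - (s i : ℂ))
      = (∫ z, ((x - (z : ℂ))⁻¹ - P z) ∂ν)
        - ∑ i, (A i : ℂ) * ((x - (s i : ℂ))⁻¹ - P (s i)) := by
    rw [hF, hP]
    simp only [mul_sub, Finset.sum_sub_distrib, div_eq_mul_inv]
    ring
  have hb1 : ‖∫ z, ((x - (z : ℂ))⁻¹ - P z) ∂ν‖
      ≤ 2 * ‖x‖⁻¹ ^ (2 * M + 1) * (μ (Set.Icc (0:ℝ) 1)).toReal := by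
    refine (norm_integral_le_of_norm_le_const (C := 2 * ‖x‖⁻¹ ^ (2 * M + 1)) ?_).trans_eq ?_
    · filter_upwards [hν] with z hz using hbd z hz
    · simp [hνdef, Measure.real]
  have hb2 : ‖∑ i, (A i : ℂ) * ((x - (s i : ℂ))⁻¹ - P (s i))‖
      ≤ 2 * ‖x‖⁻¹ ^ (2 * M + 1) * (μ (Set.Icc (0:ℝ) 1)).toReal := by
    rw [← hsumA, Finset.mul_sum]
    refine norm_sum_le_of_le _ fun i _ => ?_
    rw [norm_mul, Complex.norm_real, Real.norm_eq_abs, abs_of_pos (hA i), mul_comm]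
    exact mul_le_mul_of_nonneg_right (hbd _ (hsI i)) (hA i).le
  rw [hdiff]
  refine (norm_sub_le _ _).trans ((add_le_add hb1 hb2).trans_eq ?_)
  rw [Real.norm_of_nonneg (by positivity)]
  ring
end

section
/- Let μ be a finite positive Borel measure on [0,1] and let L, M be integers with M ≥ 0, L ≥ 0 and L − M + 1 ≥ 0. Then there exist real polynomials P and Q with deg P ≤ L, deg Q ≤ M and Q(0) = 1, such that f(ξ) − P(ξ)/Q(ξ) = O(ξ^{L+M+1}) as ξ → 0 in ℂ. -/
/-!
The denominator of the Padé approximant comes from a monic orthogonal polynomial. Write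
`f(ξ) = ∑ (-1)ⁿ μₙ ξⁿ`, put `N = L + 1 - M ≥ 0`, and set `Q(ξ) = ∑ₖ (-1)ᵏ b_{M-k} ξᵏ`. Up to sign,
the coefficients of `Q f` of orders `L + 1, …, L + M` are the numbers
`∑ᵢ bᵢ μ_{i+j+N} = ∫ zʲ B(z) z^N dμ(z)`, `0 ≤ j < M`, where `B(z) = ∑ᵢ bᵢ zⁱ`. They vanish when `B`
is orthogonal to all polynomials of degree `< M` for the positive measure `z^N dμ`; the
normalisation `Q(0) = 1` says that `B` is monic of degree `M`. Such a `B` exists even if `μ` has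
finite support: subtract from `z^M` its orthogonal projection onto the span of `1, …, z^{M-1}`
(`exists_monic_orthogonal`). The numerator `P` is the truncation of `Q f` at order `L`
(`exists_pade_algebraic`). The analytic input is that `f` differs from its Taylor polynomial of
degree `< K` by `O(ξ^K)` (`stieltjes_taylor`), and that `1 / Q` is bounded near `0`.
-/

open MeasureTheory Polynomial Filter Asymptotics

/-- The residual of the orthogonal projection of `v M` onto the span of `v 0, …, v (M - 1)`, with
leading coefficient `1`. No linear independence is needed. -/
lemma exists_residual {E : Type*} [NormedAddCommGroup E] [InnerProductSpace ℝ E]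
    (v : ℕ → E) (M : ℕ) :
    ∃ b : ℕ → ℝ, b M = 1 ∧
      ∀ j < M, ∑ i ∈ Finset.range (M + 1), b i * inner ℝ (v i) (v j) = 0 := by
  let K : Submodule ℝ E := Submodule.span ℝ (Set.range fun i : Fin M => v i)
  have : FiniteDimensional ℝ K := FiniteDimensional.span_of_finite ℝ (Set.finite_range _)
  obtain ⟨a, ha⟩ := (Submodule.mem_span_range_iff_exists_fun ℝ).1
    (K.starProjection_apply_mem (v M))
  refine ⟨fun i => if h : i < M then -a ⟨i, h⟩ else 1, by simp, fun j hj => ?_⟩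
  have h1 : inner ℝ (v M - K.starProjection (v M)) (v j) = 0 :=
    Submodule.starProjection_inner_eq_zero (v M) (v j)
      (Submodule.subset_span ⟨⟨j, hj⟩, rfl⟩)
  rw [← ha, inner_sub_left, sum_inner] at h1
  rw [Finset.sum_range_succ, Finset.sum_range]
  simp only [Fin.is_lt, dite_true, Fin.eta, lt_irrefl, dite_false, one_mul, neg_mul,
    Finset.sum_neg_distrib]
  simp only [real_inner_smul_left] at h1
  linarith

/-- A monic polynomial `∑ bᵢ zⁱ` of degree `M` orthogonal to all lower degrees for the weight
`z^N dμ` on `[0,1]`. The orthogonality takes place in `L²(μ)`, between the functions `zⁱ (√z)^N`. -/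
lemma exists_monic_orthogonal (μ : Measure ℝ) [IsFiniteMeasure μ] (M N : ℕ) :
    ∃ b : ℕ → ℝ, b M = 1 ∧ ∀ j < M, ∑ i ∈ Finset.range (M + 1),
      b i * ∫ z in Set.Icc (0:ℝ) 1, z ^ (i + j + N) ∂μ = 0 := by
  set ν := μ.restrict (Set.Icc (0:ℝ) 1)
  have hmem : ∀ i : ℕ, MemLp (fun z : ℝ => z ^ i * (√z) ^ N) 2 ν := fun i => by
    refine MemLp.of_bound (by fun_prop) 1 ?_
    filter_upwards [ae_restrict_mem measurableSet_Icc] with z hz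
    have h0 : 0 ≤ z ^ i * (√z) ^ N := mul_nonneg (pow_nonneg hz.1 _) (by positivity)
    rw [Real.norm_of_nonneg h0]
    exact mul_le_one₀ (pow_le_one₀ hz.1 hz.2) (by positivity)
      (pow_le_one₀ (Real.sqrt_nonneg _) (Real.sqrt_le_one.2 hz.2))
  obtain ⟨b, hb, h⟩ := exists_residual (fun i => (hmem i).toLp) M
  refine ⟨b, hb, fun j hj => (Finset.sum_congr rfl fun i _ => ?_).trans (h j hj)⟩
  congr 1
  rw [L2.inner_def]
  refine integral_congr_ae ?_
  filter_upwards [(hmem i).coeFn_toLp, (hmem j).coeFn_toLp,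
    ae_restrict_mem measurableSet_Icc] with z hi hj hz
  rw [hi, hj]
  have hs : (√z) ^ N * (√z) ^ N = z ^ N := by
    rw [← mul_pow, Real.mul_self_sqrt hz.1]
  simp only [RCLike.inner_apply, conj_trivial]
  rw [pow_add, pow_add, ← hs]
  ring

/-- The signed moment `(-1)ⁿ μₙ`, i.e. the `n`-th Taylor coefficient of the Stieltjes function. -/
noncomputable def stieltjesCoeff (μ : Measure ℝ) (n : ℕ) : ℝ :=
  (-1) ^ n * ∫ z in Set.Icc (0:ℝ) 1, z ^ n ∂μ

/-- The Taylor polynomial of degree `< K` of the Stieltjes function. -/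
noncomputable def stieltjesTaylor (μ : Measure ℝ) (K : ℕ) : ℝ[X] :=
  ∑ n ∈ Finset.range K, C (stieltjesCoeff μ n) * X ^ n

lemma stieltjesTaylor_coeff (μ : Measure ℝ) {K n : ℕ} (h : n < K) :
    (stieltjesTaylor μ K).coeff n = stieltjesCoeff μ n := by
  simp [stieltjesTaylor, coeff_X_pow, h]

/-- The Padé conditions as a divisibility of polynomials: `Q T - P` has no terms of order
`≤ L + M`, where `T` is the Taylor polynomial of the Stieltjes function. -/
lemma exists_pade_algebraic (μ : Measure ℝ) [IsFiniteMeasure μ] (L M : ℕ) (hLM : M ≤ L + 1) :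
    ∃ P Q : ℝ[X], P.natDegree ≤ L ∧ Q.natDegree ≤ M ∧ Q.coeff 0 = 1 ∧
      X ^ (L + M + 1) ∣ Q * stieltjesTaylor μ (L + M + 1) - P := by
  obtain ⟨N, hN⟩ := Nat.exists_eq_add_of_le hLM
  obtain ⟨b, hb, h⟩ := exists_monic_orthogonal μ M N
  set T := stieltjesTaylor μ (L + M + 1)
  let Q : ℝ[X] := ∑ k ∈ Finset.range (M + 1), C ((-1) ^ k * b (M - k)) * X ^ k
  refine ⟨∑ n ∈ Finset.range (L + 1), C ((Q * T).coeff n) * X ^ n, Q, ?_, ?_, ?_, ?_⟩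
  · exact natDegree_sum_le_of_forall_le _ _ fun n hn =>
      (natDegree_C_mul_X_pow_le _ _).trans (by simpa [Nat.lt_succ_iff] using hn)
  · exact natDegree_sum_le_of_forall_le _ _ fun n hn =>
      (natDegree_C_mul_X_pow_le _ _).trans (by simpa [Nat.lt_succ_iff] using hn)
  · simp [Q, coeff_X_pow, hb]
  · rw [X_pow_dvd_iff]
    intro d hd
    have hP : (∑ n ∈ Finset.range (L + 1), C ((Q * T).coeff n) * X ^ n : ℝ[X]).coeff d
        = if d < L + 1 then (Q * T).coeff d else 0 := by
      simp only [finsetSum_coeff, coeff_C_mul, coeff_X_pow, mul_ite, mul_one, mul_zero,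
        Finset.sum_ite_eq, Finset.mem_range]
    rw [coeff_sub, hP]
    split_ifs with hdL
    · exact sub_self _
    obtain ⟨j, rfl⟩ := Nat.exists_eq_add_of_le (not_lt.1 hdL)
    rw [sub_zero, Finset.sum_mul, finsetSum_coeff, ← Finset.sum_range_reflect]
    have hj : j < M := by omega
    rw [← mul_zero ((-1 : ℝ) ^ (L + 1 + j)), ← h j hj, Finset.mul_sum]
    refine Finset.sum_congr rfl fun i hi => ?_
    have hi' : i ≤ M := by simpa [Nat.lt_succ_iff] using hi
    -- With `k = M - i`, the shift `L + 1 + j - k` equals `i + j + N`.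
    obtain ⟨k, hk⟩ := Nat.exists_eq_add_of_le hi'
    have e1 : M + 1 - 1 - i = k := by omega
    have e2 : M - k = i := by omega
    have e3 : L + 1 + j = (i + j + N) + k := by omega
    rw [e1, e2, mul_assoc, coeff_C_mul, e3, coeff_X_pow_mul,
      stieltjesTaylor_coeff μ (by omega), stieltjesCoeff, pow_add]
    ring

/-- For `|ξ| < 1/2` and `z ∈ [0,1]` one has `|1 + zξ| ≥ 1/2`, so the remainder
`(-zξ)^K / (1 + zξ)` of the geometric series is at most `2 |ξ|^K`, uniformly in `z`. -/
lemma stieltjes_taylor (μ : Measure ℝ) [IsFiniteMeasure μ] (K : ℕ) :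
    (fun ξ : ℂ => (∫ z in Set.Icc (0:ℝ) 1, (1 + (z : ℂ) * ξ)⁻¹ ∂μ) -
      aeval ξ (stieltjesTaylor μ K)) =O[nhds (0 : ℂ)] fun ξ : ℂ => ξ ^ K := by
  set ν := μ.restrict (Set.Icc (0:ℝ) 1) with hν
  refine IsBigO.of_bound (2 * ν.real Set.univ) ?_
  filter_upwards [Metric.ball_mem_nhds (0 : ℂ) (ε := 1 / 2) (by norm_num)] with ξ hξ
  have hξ' : ‖ξ‖ < 1 / 2 := by simpa using hξ
  have hlow : ∀ z ∈ Set.Icc (0:ℝ) 1, 1 / 2 ≤ ‖1 + (z : ℂ) * ξ‖ := fun z hz => by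
    have h1 : ‖(z : ℂ) * ξ‖ ≤ 1 / 2 := by
      rw [norm_mul, Complex.norm_real, Real.norm_of_nonneg hz.1]
      nlinarith [norm_nonneg ξ, hz.1, hz.2]
    have h2 := norm_sub_le_norm_add (1 : ℂ) ((z : ℂ) * ξ)
    rw [norm_one] at h2
    linarith
  have hint : Integrable (fun z : ℝ => (1 + (z : ℂ) * ξ)⁻¹) ν := by
    refine Integrable.of_bound (Measurable.aestronglyMeasurable (by fun_prop)) 2 ?_
    filter_upwards [ae_restrict_mem measurableSet_Icc] with z hz
    rw [norm_inv]
    exact inv_le_of_inv_le₀ (by norm_num) (by simpa using hlow z hz)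
  have hmon : ∀ n : ℕ, Integrable (fun z : ℝ => (-1 : ℂ) ^ n * ((z ^ n : ℝ) : ℂ) * ξ ^ n) ν :=
    fun n => by
    refine Integrable.mul_const (Integrable.const_mul (Integrable.ofReal ?_) _) _
    exact (by fun_prop : Continuous fun z : ℝ => z ^ n).continuousOn.integrableOn_compact
      isCompact_Icc
  have hT : aeval ξ (stieltjesTaylor μ K) =
      ∫ z, ∑ n ∈ Finset.range K, (-1 : ℂ) ^ n * ((z ^ n : ℝ) : ℂ) * ξ ^ n ∂ν := by
    rw [integral_finsetSum _ fun n _ => hmon n, stieltjesTaylor, map_sum]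
    refine Finset.sum_congr rfl fun n _ => ?_
    rw [integral_mul_const, integral_const_mul, integral_complex_ofReal]
    simp [stieltjesCoeff, hν]
  rw [hT, ← integral_sub hint (integrable_finsetSum _ fun n _ => hmon n)]
  have hbd : ∀ᵐ z : ℝ ∂ν, ‖(1 + (z : ℂ) * ξ)⁻¹ -
      ∑ n ∈ Finset.range K, (-1 : ℂ) ^ n * ((z ^ n : ℝ) : ℂ) * ξ ^ n‖ ≤ 2 * ‖ξ‖ ^ K := by
    filter_upwards [ae_restrict_mem measurableSet_Icc] with z hz
    have h0 := hlow z hz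
    have hne : 1 + (z : ℂ) * ξ ≠ 0 := norm_pos_iff.1 (by linarith)
    -- The remainder of the finite geometric series with ratio `-zξ`.
    have hgeom : (1 + (z : ℂ) * ξ)⁻¹ -
        ∑ n ∈ Finset.range K, (-1 : ℂ) ^ n * ((z ^ n : ℝ) : ℂ) * ξ ^ n
        = (-((z : ℂ) * ξ)) ^ K * (1 + (z : ℂ) * ξ)⁻¹ := by
      have hs : ∑ n ∈ Finset.range K, (-1 : ℂ) ^ n * ((z ^ n : ℝ) : ℂ) * ξ ^ n
          = ∑ n ∈ Finset.range K, (-((z : ℂ) * ξ)) ^ n :=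
        Finset.sum_congr rfl fun n _ => by
          rw [neg_pow ((z : ℂ) * ξ), mul_pow]; push_cast; ring
      have hg := mul_neg_geom_sum (-((z : ℂ) * ξ)) K
      rw [sub_neg_eq_add] at hg
      rw [hs]
      field_simp
      rw [hg]
      ring
    rw [hgeom, norm_mul, norm_inv, norm_pow, norm_neg, norm_mul, Complex.norm_real,
      Real.norm_of_nonneg hz.1, mul_comm (2 : ℝ)]
    have hi : ‖1 + (z : ℂ) * ξ‖⁻¹ ≤ 2 := inv_le_of_inv_le₀ (by norm_num) (by simpa using h0)
    have hp : z * ‖ξ‖ ≤ ‖ξ‖ := mul_le_of_le_one_left (norm_nonneg _) hz.2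
    have := hz.1
    gcongr
  refine (norm_integral_le_of_norm_le_const hbd).trans (le_of_eq ?_)
  rw [norm_pow]
  ring

/-- **Existence of standard `[L/M]` Padé approximants for the auxiliary Stieltjes function
`f(ξ) = ∫₀¹ dμ(z)/(1+zξ)`.** For a finite positive Borel measure `μ` on `[0,1]` and integers
`L, M ≥ 0` with `L - M + 1 ≥ 0`, there exist real polynomials `P`, `Q` with `deg P ≤ L`,
`deg Q ≤ M`, `Q(0) = 1`, such that `f(ξ) - P(ξ)/Q(ξ) = O(ξ^{L+M+1})` as `ξ → 0` in `ℂ`. -/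
theorem pade_exists_aux_fun
    (μ : Measure ℝ) [IsFiniteMeasure μ] (L M : ℕ) (hLM : M ≤ L + 1) :
    ∃ P Q : Polynomial ℝ,
      P.natDegree ≤ L ∧ Q.natDegree ≤ M ∧ Q.coeff 0 = 1 ∧
      (fun ξ : ℂ =>
          (∫ z in Set.Icc (0:ℝ) 1, (1 + (z : ℂ) * ξ)⁻¹ ∂μ) -
            Polynomial.aeval ξ P / Polynomial.aeval ξ Q)
        =O[nhds (0 : ℂ)] fun ξ : ℂ => ξ ^ (L + M + 1) := by
  obtain ⟨P, Q, hP, hQ, hQ0, R, hR⟩ := exists_pade_algebraic μ L M hLM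
  refine ⟨P, Q, hP, hQ, hQ0, ?_⟩
  have hQ1 : aeval (0 : ℂ) Q = 1 := by
    rw [← coeff_zero_eq_aeval_zero', hQ0, map_one]
  have hQc : ContinuousAt (fun ξ : ℂ => aeval ξ Q) 0 := Q.continuous_aeval.continuousAt
  have hQne : ∀ᶠ ξ : ℂ in nhds 0, aeval ξ Q ≠ 0 :=
    hQc.eventually_ne (by rw [hQ1]; exact one_ne_zero)
  have hbdd : (fun ξ : ℂ => aeval ξ R / aeval ξ Q) =O[nhds (0 : ℂ)] fun _ => (1 : ℂ) :=
    (R.continuous_aeval.continuousAt.div hQc (by rw [hQ1]; exact one_ne_zero)).tendsto.isBigO_one ℂ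
  have h2 : (fun ξ : ℂ => ξ ^ (L + M + 1) * (aeval ξ R / aeval ξ Q))
      =O[nhds (0 : ℂ)] fun ξ : ℂ => ξ ^ (L + M + 1) := by
    simpa using (isBigO_refl (fun ξ : ℂ => ξ ^ (L + M + 1)) (nhds 0)).mul hbdd
  -- `f - P / Q = (f - T) + (Q T - P) / Q` with `T` the Taylor polynomial.
  refine ((stieltjes_taylor μ (L + M + 1)).add h2).congr' ?_ EventuallyEq.rfl
  filter_upwards [hQne] with ξ hξ
  have hev := congrArg (aeval ξ) hR
  simp only [map_sub, map_mul, map_pow, aeval_X] at hev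
  rw [← mul_div_assoc, ← hev, sub_div, mul_div_cancel_left₀ _ hξ, sub_add_sub_cancel]
end

section
/- Let μ be a finite positive Borel measure on [0,1] whose support is an infinite set, and let L, M be integers with M ≥ 1 and L − M + 1 ≥ 0. Then there exist a real polynomial T of degree ≤ L − M (with T = 0 when L = M − 1), distinct real numbers p_1,…,p_M all lying in (−∞,−1], and positive real numbers λ'_1,…,λ'_M, such that f(ξ) − ( T(ξ) + Σ_{i=1}^M λ'_i/(ξ − p_i) ) = O(ξ^{L+M+1}) as ξ → 0 in ℂ. In particular every [L/M] Padé approximant of f has only simple real poles in (−∞,−1], each with positive residue. -/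
/-! Put `k = L + 1 - M`. The heart of the matter is Gauss quadrature for the measure `z ^ k dμ` on
`[0,1]`: it has `M` nodes `z i ∈ (0,1)`, positive weights `w i`, and is exact in degree `< 2 * M`.
Setting `c i = w i / z i ^ k`, the discrete sum `∑ i, c i * z i ^ n` equals the `n`-th moment of `μ`
for `k ≤ n ≤ L + M`, so `∑ i, c i / (1 + z i * ξ)` has the Taylor coefficients of `f` in those
orders; the polynomial `T` corrects the orders `n < k`. The poles are `-1 / z i` and the residues
`c i / z i`. Beyond order `L + M` the geometric remainders are uniformly `O(ξ ^ (L + M + 1))`.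

Quadrature is derived for an abstract strictly positive functional `ℓ` on polynomials. The
orthogonal polynomial `Q` of degree `M` cannot have a nonconstant factor `A` of constant sign on
`[0,1]`: with `Q = A * B`, orthogonality gives `ℓ (A * B ^ 2) = 0`
(`natDegree_factor_eq_zero`). This excludes at once nonreal zeros, repeated zeros and zeros
outside `(0,1)`. The infinite support of `μ` enters only as strict positivity of
`P ↦ ∫ z ^ k * P z ∂μ` (`momentFunctional_pos`). -/


open MeasureTheory Polynomial Filter Asymptotics

/-- The (topological) support of a Borel measure on `ℝ`: the set of points each of whose
neighborhoods has positive measure. -/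
def measureSupport (μ : MeasureTheory.Measure ℝ) : Set ℝ :=
  {x : ℝ | ∀ U ∈ nhds x, μ U ≠ 0}

/-! ### Gauss quadrature for a positive functional on polynomials -/

/-- Strict positivity of a linear functional on polynomials that are nonnegative on `[0,1]`. For
integration against a measure this encodes that the measure is not carried by finitely many
points. -/
def StrictlyPosOnUnit (ℓ : ℝ[X] →ₗ[ℝ] ℝ) : Prop :=
  ∀ P : ℝ[X], P ≠ 0 → (∀ x ∈ Set.Icc (0:ℝ) 1, 0 ≤ P.eval x) → 0 < ℓ P

/-- The monic orthogonal polynomial of degree `M` exists: the Gram form of `ℓ` on polynomials of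
degree `< M` is nondegenerate, so the functional `R ↦ ℓ (X ^ M * R)` is represented by some
`P` of degree `< M`, and `X ^ M - P` is the required polynomial. -/
lemma exists_monic_orthogonal_s4 {ℓ : ℝ[X] →ₗ[ℝ] ℝ} (hℓ : StrictlyPosOnUnit ℓ) (M : ℕ) :
    ∃ Q : ℝ[X], Q.Monic ∧ Q.natDegree = M ∧ ∀ R : ℝ[X], R.degree < M → ℓ (Q * R) = 0 := by
  have : FiniteDimensional ℝ (degreeLT ℝ M) :=
    Module.Finite.equiv (degreeLTEquiv ℝ M).symm
  let B : ℝ[X] →ₗ[ℝ] Module.Dual ℝ (degreeLT ℝ M) :=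
    ((LinearMap.mul ℝ ℝ[X]).compr₂ ℓ).compl₂ (degreeLT ℝ M).subtype
  have hB : ∀ (P : ℝ[X]) (R : degreeLT ℝ M), B P R = ℓ (P * R) := fun P R => rfl
  let φ : degreeLT ℝ M →ₗ[ℝ] Module.Dual ℝ (degreeLT ℝ M) := B.comp (degreeLT ℝ M).subtype
  have hinj : Function.Injective φ := by
    rw [injective_iff_map_eq_zero]
    intro P hP
    by_contra hne
    have h1 : ℓ ((P : ℝ[X]) * P) = 0 := by
      have := congrArg (fun g => g P) hP
      simpa [φ, hB] using this
    have hne' : (P : ℝ[X]) ≠ 0 := fun h => hne (Subtype.ext h)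
    have h2 := hℓ ((P : ℝ[X]) * P) (mul_ne_zero hne' hne')
      (fun x _ => by rw [eval_mul]; exact mul_self_nonneg _)
    exact h2.ne' h1
  have hsurj : Function.Surjective φ :=
    (LinearMap.injective_iff_surjective_of_finrank_eq_finrank
      (Subspace.dual_finrank_eq).symm).1 hinj
  obtain ⟨P, hP⟩ := hsurj (B (X ^ M))
  have hPdeg : (P : ℝ[X]).degree < M := mem_degreeLT.1 P.2
  refine ⟨X ^ M - (P : ℝ[X]), monic_X_pow_sub hPdeg, natDegree_eq_of_degree_eq_some ?_, ?_⟩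
  · rw [degree_sub_eq_left_of_degree_lt (by rwa [degree_X_pow]), degree_X_pow]
  · intro R hR
    have := congrArg (fun g => g ⟨R, mem_degreeLT.2 hR⟩) hP
    have h3 : ℓ ((P : ℝ[X]) * R) = ℓ (X ^ M * R) := this
    rw [sub_mul, map_sub, h3, sub_self]

/-- The key property of the orthogonal polynomial: a factor of constant sign on `[0,1]` is
constant, because `ℓ ((A * B) * B) = ℓ (A * B ^ 2)` would otherwise be both zero and nonzero. -/
lemma natDegree_factor_eq_zero {ℓ : ℝ[X] →ₗ[ℝ] ℝ} (hℓ : StrictlyPosOnUnit ℓ) {M : ℕ}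
    {A B : ℝ[X]} (hne : A * B ≠ 0) (hdeg : (A * B).natDegree = M)
    (horth : ∀ R : ℝ[X], R.degree < M → ℓ (A * B * R) = 0)
    (hA : (∀ x ∈ Set.Icc (0:ℝ) 1, 0 ≤ A.eval x) ∨ (∀ x ∈ Set.Icc (0:ℝ) 1, A.eval x ≤ 0)) :
    A.natDegree = 0 := by
  by_contra h
  have hA0 := left_ne_zero_of_mul hne
  have hB0 := right_ne_zero_of_mul hne
  rw [natDegree_mul hA0 hB0] at hdeg
  have hz : ℓ (A * B * B) = 0 := horth B (by
    rw [degree_eq_natDegree hB0]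
    exact_mod_cast (by omega : B.natDegree < M))
  rcases hA with hA | hA
  · refine (hℓ (A * B * B) (mul_ne_zero hne hB0) fun x hx => ?_).ne' hz
    rw [eval_mul, eval_mul, mul_assoc]
    exact mul_nonneg (hA x hx) (mul_self_nonneg _)
  · refine (hℓ (-(A * B * B)) (neg_ne_zero.2 (mul_ne_zero hne hB0)) fun x hx => ?_).ne'
      (by rw [map_neg, hz, neg_zero])
    rw [eval_neg, eval_mul, eval_mul, mul_assoc, Left.nonneg_neg_iff]
    exact mul_nonpos_of_nonpos_of_nonneg (hA x hx) (mul_self_nonneg _)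

/-- A real polynomial without real roots has constant sign. -/
lemma const_sign_of_roots_eq_zero {B : ℝ[X]} (hB : B ≠ 0) (hr : B.roots = 0) :
    (∀ x ∈ Set.Icc (0:ℝ) 1, 0 ≤ B.eval x) ∨ (∀ x ∈ Set.Icc (0:ℝ) 1, B.eval x ≤ 0) := by
  by_contra! h
  obtain ⟨⟨x, hx, hx0⟩, ⟨y, hy, hy0⟩⟩ := h
  obtain ⟨c, -, hc⟩ := isPreconnected_Icc.intermediate_value hx hy
    (B.continuous.continuousOn) (show (0:ℝ) ∈ Set.Icc _ _ from ⟨hx0.le, hy0.le⟩)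
  have : c ∈ B.roots := (mem_roots hB).2 hc
  simp [hr] at this

/-- The orthogonal polynomial has `M` distinct zeros, all in `(0,1)`. -/
lemma orthogonal_roots {ℓ : ℝ[X] →ₗ[ℝ] ℝ} (hℓ : StrictlyPosOnUnit ℓ) {M : ℕ}
    {Q : ℝ[X]} (hQ : Q.Monic) (hdeg : Q.natDegree = M)
    (horth : ∀ R : ℝ[X], R.degree < M → ℓ (Q * R) = 0) :
    Q.roots.Nodup ∧ Q.roots.card = M ∧ ∀ r ∈ Q.roots, r ∈ Set.Ioo (0:ℝ) 1 := by
  have hQ0 := hQ.ne_zero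
  have key : ∀ A B : ℝ[X], Q = A * B →
      ((∀ x ∈ Set.Icc (0:ℝ) 1, 0 ≤ A.eval x) ∨ (∀ x ∈ Set.Icc (0:ℝ) 1, A.eval x ≤ 0)) →
      A.natDegree = 0 := by
    intro A B h hA
    exact natDegree_factor_eq_zero hℓ (h ▸ hQ0) (h ▸ hdeg) (h ▸ horth) hA
  refine ⟨?_, ?_, ?_⟩
  · rw [Multiset.nodup_iff_count_le_one]
    intro a
    by_contra! h
    rw [count_roots] at h
    obtain ⟨B, hB⟩ := (pow_dvd_pow (X - C a) h).trans (pow_rootMultiplicity_dvd Q a)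
    have := key _ B hB (Or.inl fun x _ => by
      simp only [eval_pow, eval_sub, eval_X, eval_C]; exact sq_nonneg _)
    simp at this
  · obtain ⟨B, hB, hcard, hroots⟩ := exists_prod_multiset_X_sub_C_mul Q
    have hB0 : B ≠ 0 := by rintro rfl; simp at hB; exact hQ0 hB.symm
    have := key B _ (by rw [mul_comm]; exact hB.symm) (const_sign_of_roots_eq_zero hB0 hroots)
    omega
  · intro r hr
    obtain ⟨B, hB⟩ := dvd_iff_isRoot.2 ((mem_roots hQ0).1 hr)
    by_contra hr'
    have : (X - C r).natDegree = 0 := by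
      refine key _ B hB ?_
      simp only [eval_sub, eval_X, eval_C]
      rcases le_or_gt r 0 with h | h
      · exact Or.inl fun x hx => by linarith [hx.1]
      · have h1 : 1 ≤ r := by
          by_contra! h1
          exact hr' ⟨h, h1⟩
        exact Or.inr fun x hx => by linarith [hx.2]
    simp at this

/-- Gauss quadrature: `M` nodes in `(0,1)` and positive weights that reproduce `ℓ` on all
polynomials of degree `< 2 * M`. -/
lemma gauss_quadrature {ℓ : ℝ[X] →ₗ[ℝ] ℝ} (hℓ : StrictlyPosOnUnit ℓ) {M : ℕ} :
    ∃ z w : Fin M → ℝ, Function.Injective z ∧ (∀ i, z i ∈ Set.Ioo (0:ℝ) 1) ∧ (∀ i, 0 < w i) ∧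
      ∀ P : ℝ[X], P.degree < (2 * M : ℕ) → ℓ P = ∑ i, w i * P.eval (z i) := by
  obtain ⟨Q, hQ, hdeg, horth⟩ := exists_monic_orthogonal_s4 hℓ M
  obtain ⟨hnd, hcard, hmem⟩ := orthogonal_roots hℓ hQ hdeg horth
  have hcard' : Q.roots.toFinset.card = M := by
    rw [Multiset.toFinset_card_of_nodup hnd, hcard]
  let z : Fin M → ℝ := Q.roots.toFinset.orderEmbOfFin hcard'
  have hz : ∀ i, z i ∈ Q.roots := fun i =>
    Multiset.mem_toFinset.1 (Finset.orderEmbOfFin_mem _ hcard' i)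
  have hzinj : Function.Injective z := (Q.roots.toFinset.orderEmbOfFin hcard').injective
  have hzQ : ∀ i, Q.eval (z i) = 0 := fun i => (mem_roots hQ.ne_zero).1 (hz i)
  have hinjOn : Set.InjOn z (Finset.univ : Finset (Fin M)) := hzinj.injOn
  let b : Fin M → ℝ[X] := fun i => Lagrange.basis Finset.univ z i
  have hQdeg : Q.degree = M := by rw [degree_eq_natDegree hQ.ne_zero, hdeg]
  have hexact : ∀ P : ℝ[X], P.degree < (2 * M : ℕ) → ℓ P = ∑ i, ℓ (b i) * P.eval (z i) := by
    intro P hP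
    have hdiv := modByMonic_add_div P Q
    have hrem : (P %ₘ Q).degree < M := hQdeg ▸ degree_modByMonic_lt P hQ
    have hquot : (P /ₘ Q).degree < M := by
      rcases lt_or_ge P.degree Q.degree with h | h
      · rw [(divByMonic_eq_zero_iff hQ).2 h, degree_zero]
        exact WithBot.bot_lt_coe _
      · have h1 := degree_add_divByMonic hQ h
        have hD0 : P /ₘ Q ≠ 0 := by
          intro h0
          rw [divByMonic_eq_zero_iff hQ] at h0
          exact absurd h0 (not_lt.2 h)
        rw [← h1, hQdeg, degree_eq_natDegree hD0] at hP
        rw [degree_eq_natDegree hD0]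
        have : M + (P /ₘ Q).natDegree < 2 * M := by exact_mod_cast hP
        exact_mod_cast (by omega : (P /ₘ Q).natDegree < M)
    have hev : ∀ i, (P %ₘ Q).eval (z i) = P.eval (z i) := by
      intro i
      conv_rhs => rw [← hdiv]
      simp [hzQ i]
    have hint := Lagrange.eq_interpolate (f := P %ₘ Q) hinjOn (by simpa using hrem)
    calc ℓ P = ℓ (P %ₘ Q) + ℓ (Q * (P /ₘ Q)) := by rw [← map_add, hdiv]
      _ = ℓ (P %ₘ Q) := by rw [horth _ hquot, add_zero]
      _ = ∑ i, ℓ (b i) * P.eval (z i) := by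
        rw [hint, Lagrange.interpolate_apply, map_sum]
        refine Finset.sum_congr rfl fun i _ => ?_
        rw [← smul_eq_C_mul, map_smul, hev, smul_eq_mul, mul_comm]
  refine ⟨z, fun i => ℓ (b i), hzinj, fun i => hmem _ (hz i), fun i => ?_, hexact⟩
  -- `ℓ (b i) = ℓ (b i ^ 2)` since `b i ^ 2` has degree `< 2 * M` and the same values at the nodes.
  have hbdeg : (b i).degree = ((M - 1 : ℕ) : WithBot ℕ) := by
    simpa using Lagrange.degree_basis hinjOn (Finset.mem_univ i)
  have hb0 : b i ≠ 0 := by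
    intro h
    rw [h, degree_zero] at hbdeg
    exact WithBot.bot_ne_coe hbdeg
  have hM : 0 < M := i.pos
  have h1 : ℓ (b i * b i) = ℓ (b i) := by
    rw [hexact (b i * b i) (by
      rw [degree_mul, hbdeg]
      exact_mod_cast (by omega : M - 1 + (M - 1) < 2 * M)), Finset.sum_eq_single i]
    · simp [b, Lagrange.eval_basis_self hinjOn (Finset.mem_univ i)]
    · intro j _ hj
      simp [b, Lagrange.eval_basis_of_ne hj.symm (Finset.mem_univ j)]
    · simp
  change 0 < ℓ (b i)
  rw [← h1]
  exact hℓ _ (mul_ne_zero hb0 hb0) fun x _ => by rw [eval_mul]; exact mul_self_nonneg _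

/-! ### The weighted moment functional -/

/-- The functional `P ↦ ∫ z ^ k * P z` over `[0,1]`. -/
noncomputable def momentFunctional (μ : Measure ℝ) [IsFiniteMeasure μ] (k : ℕ) :
    ℝ[X] →ₗ[ℝ] ℝ where
  toFun P := ∫ z in Set.Icc (0:ℝ) 1, z ^ k * P.eval z ∂μ
  map_add' P R := by
    rw [← integral_add]
    · simp only [eval_add, mul_add]
    · exact (by fun_prop : Continuous fun z : ℝ => z ^ k * P.eval z).continuousOn.integrableOn_compact
        isCompact_Icc
    · exact (by fun_prop : Continuous fun z : ℝ => z ^ k * R.eval z).continuousOn.integrableOn_compact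
        isCompact_Icc
  map_smul' c P := by
    rw [RingHom.id_apply, smul_eq_mul, ← integral_const_mul]
    congr 1
    ext z
    rw [eval_smul, smul_eq_mul]
    ring

/-- If the integral of a nonnegative `z ^ k * P z` vanished, `μ` would not charge the complement
of the finite zero set of `X ^ k * P`, so its support would be finite. -/
lemma momentFunctional_pos (μ : Measure ℝ) [IsFiniteMeasure μ]
    (hμsupp : μ (Set.Icc (0:ℝ) 1)ᶜ = 0) (hinf : (measureSupport μ).Infinite) (k : ℕ) :
    StrictlyPosOnUnit (momentFunctional μ k) := by
  intro P hP hnn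
  have hres : μ.restrict (Set.Icc (0:ℝ) 1) = μ := Measure.restrict_eq_self_of_ae_mem hμsupp
  have hnn' : ∀ z ∈ Set.Icc (0:ℝ) 1, 0 ≤ z ^ k * P.eval z := fun z hz =>
    mul_nonneg (pow_nonneg hz.1 k) (hnn z hz)
  have hae : 0 ≤ᵐ[μ.restrict (Set.Icc (0:ℝ) 1)] fun z => z ^ k * P.eval z :=
    (ae_restrict_mem measurableSet_Icc).mono hnn'
  have hint : IntegrableOn (fun z : ℝ => z ^ k * P.eval z) (Set.Icc (0:ℝ) 1) μ :=
    (by fun_prop : Continuous fun z : ℝ => z ^ k * P.eval z).continuousOn.integrableOn_compact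
      isCompact_Icc
  refine lt_of_le_of_ne (integral_nonneg_of_ae hae) fun h0 => hinf ?_
  have hz := (integral_eq_zero_iff_of_nonneg_ae hae hint).1 h0.symm
  rw [hres] at hz
  have hne : X ^ k * P ≠ 0 := mul_ne_zero (pow_ne_zero _ X_ne_zero) hP
  refine ((X ^ k * P).roots.toFinset.finite_toSet).subset fun x hx => ?_
  by_contra hxr
  refine hx ((X ^ k * P).roots.toFinset : Set ℝ)ᶜ
    ((Finset.finite_toSet _).isClosed.isOpen_compl.mem_nhds hxr) (measure_mono_null ?_ hz)
  intro y hy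
  have : ¬ (X ^ k * P).IsRoot y := by simpa [hne] using hy
  simpa [IsRoot.def] using this

/-! ### Padé approximation -/

/-- The remainder of the geometric expansion of `1 / (1 + z * ξ)` after `N` terms. -/
noncomputable def geomRem (N : ℕ) (z : ℝ) (ξ : ℂ) : ℂ :=
  (1 + (z : ℂ) * ξ)⁻¹ - ∑ n ∈ Finset.range N, (z : ℂ) ^ n * (-ξ) ^ n

lemma half_le_norm_one_add {z : ℝ} (hz : z ∈ Set.Icc (0:ℝ) 1) {ξ : ℂ} (hξ : ‖ξ‖ ≤ 1 / 2) :
    1 / 2 ≤ ‖1 + (z : ℂ) * ξ‖ := by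
  have h1 : ‖(z : ℂ) * ξ‖ ≤ 1 / 2 := by
    rw [norm_mul, Complex.norm_real, Real.norm_of_nonneg hz.1]
    nlinarith [hz.1, hz.2, norm_nonneg ξ]
  have h2 := norm_sub_le (1 + (z : ℂ) * ξ) ((z : ℂ) * ξ)
  rw [add_sub_cancel_right, norm_one] at h2
  linarith

lemma norm_geomRem_le (N : ℕ) {z : ℝ} (hz : z ∈ Set.Icc (0:ℝ) 1) {ξ : ℂ} (hξ : ‖ξ‖ ≤ 1 / 2) :
    ‖geomRem N z ξ‖ ≤ 2 * ‖ξ‖ ^ N := by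
  have hl := half_le_norm_one_add hz hξ
  have hne : 1 + (z : ℂ) * ξ ≠ 0 := by
    rw [← norm_pos_iff]; linarith
  have hg := mul_neg_geom_sum (-((z : ℂ) * ξ)) N
  have heq : geomRem N z ξ = (-((z : ℂ) * ξ)) ^ N * (1 + (z : ℂ) * ξ)⁻¹ := by
    have hs : ∑ n ∈ Finset.range N, (z : ℂ) ^ n * (-ξ) ^ n
        = ∑ n ∈ Finset.range N, (-((z : ℂ) * ξ)) ^ n :=
      Finset.sum_congr rfl fun n _ => by rw [← mul_pow, mul_neg]
    rw [geomRem, hs]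
    rw [sub_neg_eq_add] at hg
    field_simp
    linear_combination -hg
  rw [heq, norm_mul, norm_pow, norm_neg, norm_mul, norm_inv, Complex.norm_real,
    Real.norm_of_nonneg hz.1]
  have h1 : (z * ‖ξ‖) ^ N ≤ ‖ξ‖ ^ N :=
    pow_le_pow_left₀ (mul_nonneg hz.1 (norm_nonneg _))
      (mul_le_of_le_one_left (norm_nonneg _) hz.2) N
  have h2 : ‖1 + (z : ℂ) * ξ‖⁻¹ ≤ 2 := by
    rw [inv_le_comm₀ (by linarith) (by norm_num)]
    linarith
  calc _ ≤ ‖ξ‖ ^ N * 2 := mul_le_mul h1 h2 (by positivity) (by positivity)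
    _ = _ := mul_comm _ _

/-- The Taylor expansion of the Stieltjes function, with integrated remainder. -/
lemma stieltjes_expansion (μ : Measure ℝ) [IsFiniteMeasure μ] (N : ℕ) {ξ : ℂ}
    (hξ : ‖ξ‖ ≤ 1 / 2) :
    ∫ z in Set.Icc (0:ℝ) 1, (1 + (z : ℂ) * ξ)⁻¹ ∂μ =
      ∑ n ∈ Finset.range N, ((∫ z in Set.Icc (0:ℝ) 1, z ^ n ∂μ : ℝ) : ℂ) * (-ξ) ^ n +
        ∫ z in Set.Icc (0:ℝ) 1, geomRem N z ξ ∂μ := by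
  have hi1 : IntegrableOn (fun z : ℝ => (1 + (z : ℂ) * ξ)⁻¹) (Set.Icc (0:ℝ) 1) μ := by
    refine ContinuousOn.integrableOn_compact isCompact_Icc
      (ContinuousOn.inv₀ (f := fun z : ℝ => 1 + (z : ℂ) * ξ) (by fun_prop) fun z hz => ?_)
    rw [← norm_pos_iff]
    linarith [half_le_norm_one_add hz hξ]
  have hi2 : ∀ n, IntegrableOn (fun z : ℝ => (z : ℂ) ^ n * (-ξ) ^ n) (Set.Icc (0:ℝ) 1) μ :=
    fun n => (by fun_prop : Continuous fun z : ℝ => (z : ℂ) ^ n * (-ξ) ^ n).continuousOn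
      |>.integrableOn_compact isCompact_Icc
  simp only [geomRem]
  rw [integral_sub hi1 (integrable_finsetSum _ fun n _ => hi2 n),
    integral_finsetSum _ fun n _ => hi2 n]
  have h : ∀ n, ∫ z in Set.Icc (0:ℝ) 1, (z : ℂ) ^ n * (-ξ) ^ n ∂μ
      = ((∫ z in Set.Icc (0:ℝ) 1, z ^ n ∂μ : ℝ) : ℂ) * (-ξ) ^ n := by
    intro n
    rw [integral_mul_const, ← integral_complex_ofReal]
    simp only [Complex.ofReal_pow]
  simp only [h]
  ring

/-- **Poles and residues of Padé approximants of a Stieltjes function with infinite spectral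
support.** If the support of `μ` is infinite and `M ≥ 1`, `L - M + 1 ≥ 0`, then there is an
accuracy-through-order `[L/M]` Padé approximant of `f(ξ) = ∫₀¹ dμ(z)/(1+zξ)` of the form
`T(ξ) + ∑ᵢ λ'ᵢ/(ξ - pᵢ)` with `deg T ≤ L - M` (`T = 0` when `L = M - 1`), distinct simple real
poles `pᵢ ∈ (-∞,-1]` and positive residues `λ'ᵢ`. -/
theorem pade_simple_poles_infinite_support
    (μ : Measure ℝ) [IsFiniteMeasure μ] (hμsupp : μ (Set.Icc (0:ℝ) 1)ᶜ = 0)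
    (hinf : (measureSupport μ).Infinite)
    (L M : ℕ) (hM : 1 ≤ M) (hLM : M ≤ L + 1) :
    ∃ (T : Polynomial ℝ) (p : Fin M → ℝ) (lam : Fin M → ℝ),
      (L + 1 = M → T = 0) ∧
      T.natDegree ≤ L - M ∧
      Function.Injective p ∧
      (∀ i, p i ≤ -1) ∧
      (∀ i, 0 < lam i) ∧
      (fun ξ : ℂ =>
          (∫ z in Set.Icc (0:ℝ) 1, (1 + (z : ℂ) * ξ)⁻¹ ∂μ) -
            (Polynomial.aeval ξ T + ∑ i, (lam i : ℂ) / (ξ - (p i : ℂ))))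
        =O[nhds (0 : ℂ)] fun ξ : ℂ => ξ ^ (L + M + 1) := by
  obtain ⟨k, hk⟩ : ∃ k, k = L + 1 - M := ⟨_, rfl⟩
  have hN : L + M + 1 = k + 2 * M := by omega
  obtain ⟨z, w, hzinj, hzmem, hw, hquad⟩ :=
    gauss_quadrature (M := M) (momentFunctional_pos μ hμsupp hinf k)
  have hz0 : ∀ i, z i ≠ 0 := fun i => (hzmem i).1.ne'
  let m : ℕ → ℝ := fun n => ∫ z in Set.Icc (0:ℝ) 1, z ^ n ∂μ
  -- Removing the weight `z ^ k` gives masses `c i` matching the moments of order `k, …, L + M`.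
  let c : Fin M → ℝ := fun i => w i / z i ^ k
  have hmom : ∀ n, k ≤ n → n < L + M + 1 → m n = ∑ i, c i * z i ^ n := by
    intro n hkn hn
    obtain ⟨j, rfl⟩ := Nat.exists_eq_add_of_le hkn
    have h := hquad (X ^ j) (by
      rw [degree_X_pow]
      exact_mod_cast (by omega : j < 2 * M))
    have h' : momentFunctional μ k (X ^ j) = m (k + j) := by
      change ∫ z in Set.Icc (0:ℝ) 1, z ^ k * (X ^ j : ℝ[X]).eval z ∂μ = _
      simp only [eval_pow, eval_X, ← pow_add, m]
    rw [← h', h]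
    refine Finset.sum_congr rfl fun i _ => ?_
    have := pow_ne_zero k (hz0 i)
    simp only [eval_pow, eval_X, c, pow_add]
    field_simp
  -- The coefficients of `T` correct the discrepancy in the moments of order `< k`.
  let d : ℕ → ℝ := fun n => m n - ∑ i, c i * z i ^ n
  let T : ℝ[X] := ∑ n ∈ Finset.range k, C (d n) * (-X) ^ n
  have hTeval : ∀ ξ : ℂ, aeval ξ T = ∑ n ∈ Finset.range (L + M + 1), (d n : ℂ) * (-ξ) ^ n := by
    intro ξ
    rw [← Finset.sum_subset (Finset.range_mono (by omega : k ≤ L + M + 1))]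
    · simp [T]
    · intro n hn hnk
      rw [Finset.mem_range] at hn hnk
      have : d n = 0 := sub_eq_zero.2 (hmom n (by omega) hn)
      simp [this]
  refine ⟨T, fun i => -(z i)⁻¹, fun i => c i / z i, ?_, ?_, ?_, ?_, ?_, ?_⟩
  · intro h
    have : k = 0 := by omega
    simp [T, this]
  · refine natDegree_sum_le_of_forall_le _ _ fun n hn => ?_
    rw [Finset.mem_range] at hn
    refine (natDegree_C_mul_le _ _).trans (natDegree_pow_le.trans ?_)
    rw [natDegree_neg, natDegree_X]
    omega
  · intro i j h
    exact hzinj (inv_injective (neg_injective h))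
  · intro i
    have := (one_le_inv₀ (hzmem i).1).2 (hzmem i).2.le
    change -(z i)⁻¹ ≤ -1
    linarith
  · intro i
    exact div_pos (div_pos (hw i) (pow_pos (hzmem i).1 k)) (hzmem i).1
  · refine IsBigO.of_bound (2 * μ.real (Set.Icc (0:ℝ) 1) + ∑ i, |c i| * 2) ?_
    filter_upwards [Metric.closedBall_mem_nhds (0 : ℂ) (by norm_num : (0:ℝ) < 1 / 2)] with ξ hξ
    have hξ' : ‖ξ‖ ≤ 1 / 2 := by simpa using hξ
    have hpole : ∀ i, ((c i / z i : ℝ) : ℂ) / (ξ - ((-(z i)⁻¹ : ℝ) : ℂ)) =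
        (c i : ℂ) * (geomRem (L + M + 1) (z i) ξ +
          ∑ n ∈ Finset.range (L + M + 1), (z i : ℂ) ^ n * (-ξ) ^ n) := by
      intro i
      have hzc : (z i : ℂ) ≠ 0 := by exact_mod_cast hz0 i
      rw [geomRem, sub_add_cancel]
      push_cast
      rw [sub_neg_eq_add, div_div, mul_add, mul_inv_cancel₀ hzc, add_comm, div_eq_mul_inv]
    have hmain : (∫ z in Set.Icc (0:ℝ) 1, (1 + (z : ℂ) * ξ)⁻¹ ∂μ) -
          (aeval ξ T + ∑ i, ((c i / z i : ℝ) : ℂ) / (ξ - ((-(z i)⁻¹ : ℝ) : ℂ))) =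
        (∫ z in Set.Icc (0:ℝ) 1, geomRem (L + M + 1) z ξ ∂μ) -
          ∑ i, (c i : ℂ) * geomRem (L + M + 1) (z i) ξ := by
      rw [stieltjes_expansion μ (L + M + 1) hξ', hTeval, Finset.sum_congr rfl fun i _ => hpole i]
      simp only [mul_add, Finset.sum_add_distrib, d, Complex.ofReal_sub, sub_mul,
        Finset.sum_sub_distrib, Complex.ofReal_sum, Complex.ofReal_mul, Complex.ofReal_pow,
        Finset.sum_mul, Finset.mul_sum, m]
      rw [Finset.sum_comm]
      simp only [mul_assoc]
      ring
    rw [hmain, norm_pow, add_mul]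
    refine (norm_sub_le _ _).trans (add_le_add ?_ ?_)
    · refine (norm_setIntegral_le_of_norm_le_const (measure_lt_top _ _)
        fun z hz => norm_geomRem_le (L + M + 1) hz hξ').trans (le_of_eq (by ring))
    · rw [Finset.sum_mul]
      refine (norm_sum_le _ _).trans (Finset.sum_le_sum fun i _ => ?_)
      rw [norm_mul, Complex.norm_real, Real.norm_eq_abs, mul_assoc]
      exact mul_le_mul_of_nonneg_left
        (norm_geomRem_le _ (Set.Ioo_subset_Icc_self (hzmem i)) hξ') (abs_nonneg _)
end

section
/- Let μ = Σ_{i=1}^n λ_i δ_{z_i} be a purely atomic measure with n ≥ 1, weights λ_i > 0, and distinct atoms z_1,…,z_n ∈ (0,1], and let f(ξ) := Σ_{i=1}^n λ_i/(1+z_i ξ). For all integers L, M with 1 ≤ M ≤ n and L − M + 1 ≥ 0, there exist a real polynomial T of degree ≤ L − M (with T = 0 when L = M − 1), distinct real numbers p_1,…,p_M in (−∞,−1], and positive reals λ'_1,…,λ'_M, such that f(ξ) − ( T(ξ) + Σ_{i=1}^M λ'_i/(ξ − p_i) ) = O(ξ^{L+M+1}) as ξ → 0 in ℂ. -/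
/-!
Expanding geometric series, `f` agrees with `T + ∑ⱼ cⱼ/(1+yⱼξ)` to order `L+M+1` for a suitable
polynomial `T` of degree `< s := L+1-M` as soon as the moments
`∑ᵢ λᵢ zᵢ^k` and `∑ⱼ cⱼ yⱼ^k` coincide for `s ≤ k < s + 2M`; the poles are then `pⱼ = -1/yⱼ`.
Such `y`, `c` come from the `M`-point Gauss quadrature of the measure `∑ᵢ λᵢ zᵢ^s δ_{zᵢ}`, with
weights `wⱼ = cⱼ yⱼ^s`.

Gauss quadrature (`exists_gauss_quadrature`) is obtained from the spectral theorem. In Euclidean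
space `ℝⁿ` let `D = diag(z)` and `u = (√ωᵢ)`, so that the moments are `⟪D^k u, D^l u⟫`. The
compression of `D` to the Krylov space `V = span {D^k u : k < M}`, which has dimension `M` because
the atoms are distinct and `M ≤ n`, is symmetric. Its eigenvalues are the nodes, and the squared
coordinates of `u` in an orthonormal eigenbasis are the weights. Since `u` is cyclic for the
compression, the weights are nonzero and the eigenvalues are simple.
-/

open Polynomial Filter Asymptotics

local notation "𝔼" => EuclideanSpace ℝ

/-- The vectors `D^k u`, `k < M`, are independent: a vanishing combination is a polynomial of degree
`< M ≤ n` with the `n` distinct roots `zᵢ`. -/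
lemma krylov_linearIndependent {n M : ℕ} (hMn : M ≤ n) (z r : Fin n → ℝ)
    (hzinj : Function.Injective z) (hr : ∀ i, r i ≠ 0) :
    LinearIndependent ℝ
      (fun k : Fin M => (WithLp.toLp 2 (fun i => z i ^ (k : ℕ) * r i) :
        𝔼 (Fin n))) := by
  rw [Fintype.linearIndependent_iff]
  intro g hg
  set P : ℝ[X] := ∑ k : Fin M, C (g k) * X ^ (k : ℕ) with hP
  have hdeg : P.degree < (M : ℕ) := by
    rw [hP]
    refine (Polynomial.degree_sum_le _ _).trans_lt ?_
    rw [Finset.sup_lt_iff (by exact WithBot.bot_lt_coe _)]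
    intro k _
    exact (Polynomial.degree_C_mul_X_pow_le _ _).trans_lt (by exact_mod_cast k.2)
  have hev : ∀ i, P.eval (z i) = 0 := by
    intro i
    have h := congrArg (fun v : 𝔼 (Fin n) => v i) hg
    simp only [WithLp.ofLp_sum, WithLp.ofLp_smul, Finset.sum_apply, Pi.smul_apply, smul_eq_mul,
      WithLp.ofLp_zero, Pi.zero_apply] at h
    have h2 : P.eval (z i) * r i = 0 := by
      rw [← h, hP, Polynomial.eval_finsetSum, Finset.sum_mul]
      refine Finset.sum_congr rfl fun k _ => ?_
      simp [mul_assoc]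
    exact (mul_eq_zero.1 h2).resolve_right (hr i)
  have hP0 : P = 0 := by
    by_contra hne
    have h1 : (Finset.univ.image z).card ≤ P.natDegree := by
      apply Polynomial.card_le_degree_of_subset_roots
      intro x hx
      obtain ⟨i, rfl⟩ : ∃ i, z i = x := by simpa using hx
      exact (Polynomial.mem_roots hne).2 (hev i)
    rw [Finset.card_image_of_injective _ hzinj, Finset.card_univ, Fintype.card_fin] at h1
    have h2 := (Polynomial.natDegree_lt_iff_degree_lt hne).2 hdeg
    omega
  intro k
  have h := congrArg (fun Q : ℝ[X] => Q.coeff (k : ℕ)) hP0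
  simpa [hP, Polynomial.finsetSum_coeff, Polynomial.coeff_C_mul, Polynomial.coeff_X_pow,
    Fin.val_inj] using h

/-- Gauss quadrature for a measure with at least `M` atoms in `(0,1]`. -/
lemma exists_gauss_quadrature {n M : ℕ} (hMn : M ≤ n) (z ω : Fin n → ℝ)
    (hz : ∀ i, z i ∈ Set.Ioc (0:ℝ) 1) (hzinj : Function.Injective z) (hω : ∀ i, 0 < ω i) :
    ∃ y w : Fin M → ℝ, Function.Injective y ∧ (∀ j, y j ∈ Set.Ioc (0:ℝ) 1) ∧ (∀ j, 0 < w j) ∧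
      ∀ m < 2 * M, ∑ i, ω i * z i ^ m = ∑ j, w j * y j ^ m := by
  let r : Fin n → ℝ := fun i => √(ω i)
  have hr2 : ∀ i, r i * r i = ω i := fun i => Real.mul_self_sqrt (hω i).le
  have hr : ∀ i, r i ≠ 0 := fun i => (Real.sqrt_pos.2 (hω i)).ne'
  let b : ℕ → 𝔼 (Fin n) := fun k => WithLp.toLp 2 (fun i => z i ^ k * r i)
  let D : 𝔼 (Fin n) →ₗ[ℝ] 𝔼 (Fin n) :=
    { toFun := fun x => WithLp.toLp 2 (fun i => z i * x i)
      map_add' := fun x y => by ext i; simp [mul_add]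
      map_smul' := fun c x => by ext i; simp; ring }
  have inner_eq : ∀ x y : 𝔼 (Fin n), inner ℝ x y = ∑ i, x i * y i := fun x y => by
    simp [PiLp.inner_apply, mul_comm]
  have hDb : ∀ k, D (b k) = b (k + 1) := fun k => by
    ext i; simp [D, b]; ring
  have hDsymm : ∀ x y : 𝔼 (Fin n), inner ℝ (D x) y = inner ℝ x (D y) := fun x y => by
    simp only [inner_eq]
    exact Finset.sum_congr rfl fun i _ => by simp [D]; ring
  have hbb : ∀ k l, inner ℝ (b k) (b l) = ∑ i, ω i * z i ^ (k + l) := fun k l => by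
    rw [inner_eq]
    exact Finset.sum_congr rfl fun i _ => by rw [← hr2 i]; simp [b]; ring
  let V : Submodule ℝ (𝔼 (Fin n)) := Submodule.span ℝ (Set.range fun k : Fin M => b k)
  have hV : Module.finrank ℝ V = M := by
    have := finrank_span_eq_card (krylov_linearIndependent hMn z r hzinj hr)
    simpa using this
  have hbV : ∀ k < M, b k ∈ V := fun k hk => Submodule.subset_span ⟨⟨k, hk⟩, rfl⟩
  let A : V →ₗ[ℝ] V := V.orthogonalProjectionOnto.toLinearMap ∘ₗ D ∘ₗ V.subtype
  have hA : ∀ x y : V, inner ℝ (A x) y = inner ℝ (D x) (y : 𝔼 (Fin n)) := fun x y =>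
    Submodule.inner_orthogonalProjectionOnto_eq_of_mem_right y (D x)
  have hAs : A.IsSymmetric := fun x y => by
    rw [hA, hDsymm, real_inner_comm, ← hA, real_inner_comm]
  let e := hAs.eigenvectorBasis hV
  let y := hAs.eigenvalues hV
  have hAe : ∀ j, A (e j) = y j • e j := fun j =>
    hAs.apply_eigenvectorBasis hV j
  have hee : ∀ i j, inner ℝ (e i : 𝔼 (Fin n)) (e j : 𝔼 (Fin n)) = if i = j then (1:ℝ) else 0 := fun i j => by
    rw [← Submodule.coe_inner]
    exact orthonormal_iff_ite.1 e.orthonormal i j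
  have hcoef : ∀ j, ∀ k ≤ M, inner ℝ (e j : 𝔼 (Fin n)) (b k) = y j ^ k * inner ℝ (e j : 𝔼 (Fin n)) (b 0) := by
    intro j k
    induction k with
    | zero => simp
    | succ k ih =>
      intro hk
      have h := hA (e j) ⟨b k, hbV k hk⟩
      rw [hAe, Submodule.coe_inner, Submodule.coe_smul, real_inner_smul_left, hDsymm, hDb,
        ih (by omega)] at h
      rw [← h]; ring
  -- `b 0` is cyclic: only the zero vector of `V` is orthogonal to all `b k`, `k < M`.
  have hcyc : ∀ v ∈ V, (∀ k < M, inner ℝ v (b k) = 0) → v = 0 := by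
    intro v hv h
    have h2 : ∀ x ∈ V, inner ℝ v x = 0 := by
      intro x hx
      induction hx using Submodule.span_induction with
      | mem x hx => obtain ⟨k, rfl⟩ := hx; exact h k k.2
      | zero => simp
      | add x y _ _ hx hy => rw [inner_add_right, hx, hy, add_zero]
      | smul c x _ hx => rw [inner_smul_right, hx, mul_zero]
    exact inner_self_eq_zero.1 (h2 v hv)
  have hne : ∀ j, inner ℝ (e j : 𝔼 (Fin n)) (b 0) ≠ 0 := by
    intro j h0
    have h : (e j : 𝔼 (Fin n)) = 0 := hcyc _ (e j).2 fun k hk => by rw [hcoef j k hk.le, h0, mul_zero]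
    have := hee j j
    simp [h] at this
  refine ⟨y, fun j => inner ℝ (e j : 𝔼 (Fin n)) (b 0) ^ 2, ?_, ?_, fun j => by
    have := hne j; positivity, ?_⟩
  · -- The eigenvector below lies in the `y i`-eigenspace and is orthogonal to `b 0`.
    intro i j hij
    by_contra hne'
    have h : inner ℝ (e j : 𝔼 (Fin n)) (b 0) • (e i : 𝔼 (Fin n)) - inner ℝ (e i : 𝔼 (Fin n)) (b 0) • (e j : 𝔼 (Fin n)) = 0 := by
      refine hcyc _ (V.sub_mem (V.smul_mem _ (e i).2) (V.smul_mem _ (e j).2)) fun k hk => ?_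
      rw [inner_sub_left, inner_smul_left, inner_smul_left, hcoef i k hk.le, hcoef j k hk.le, hij]
      simp; ring
    have h2 := congrArg (fun v => inner ℝ (e i : 𝔼 (Fin n)) v) h
    simp only [inner_sub_right, inner_smul_right, hee, inner_zero_right, if_neg hne', if_true,
      mul_one, mul_zero, sub_zero] at h2
    exact hne j h2
  · -- The Rayleigh quotient `y j = ∑ᵢ zᵢ (e j)ᵢ²` is an average of the `zᵢ`.
    intro j
    have h1 : ∑ i, (e j : 𝔼 (Fin n)) i * (e j : 𝔼 (Fin n)) i = 1 := by
      rw [← inner_eq, hee, if_pos rfl]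
    have hy : y j = ∑ i, z i * ((e j : 𝔼 (Fin n)) i * (e j : 𝔼 (Fin n)) i) := by
      have h := hA (e j) (e j)
      rw [hAe, Submodule.coe_inner, Submodule.coe_smul, real_inner_smul_left, hee, if_pos rfl,
        inner_eq, mul_one] at h
      rw [h]
      exact Finset.sum_congr rfl fun i _ => by simp [D]; ring
    constructor
    · rw [hy]
      obtain ⟨i, hi⟩ : ∃ i, (e j : 𝔼 (Fin n)) i ≠ 0 := by
        by_contra! hall
        simp [hall] at h1
      refine Finset.sum_pos' (fun i _ => mul_nonneg (hz i).1.le (mul_self_nonneg _))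
        ⟨i, Finset.mem_univ _, mul_pos (hz i).1 (mul_self_pos.2 hi)⟩
    · rw [hy, ← h1]
      exact Finset.sum_le_sum fun i _ => mul_le_of_le_one_left (mul_self_nonneg _) (hz i).2
  · intro m hm
    obtain ⟨k, l, hk, hl, rfl⟩ : ∃ k l, k < M ∧ l ≤ M ∧ m = k + l :=
      ⟨m - min m M, min m M, by omega, by omega, by omega⟩
    rw [← hbb]
    -- Parseval in `V` applies even for `l = M`, where `b l` need not lie in `V`.
    have h := e.sum_inner_mul_inner ⟨b k, hbV k hk⟩ (V.orthogonalProjectionOnto (b l))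
    have h3 : ∀ x : V, inner ℝ x (V.orthogonalProjectionOnto (b l)) = inner ℝ (x : 𝔼 (Fin n)) (b l) :=
      fun x => Submodule.inner_orthogonalProjectionOnto_eq_of_mem_left x (b l)
    simp only [h3] at h
    rw [← h]
    refine Finset.sum_congr rfl fun j _ => ?_
    rw [Submodule.coe_inner, real_inner_comm, hcoef j k hk.le, hcoef j l hl]
    ring

/-- Remainder of the truncated geometric series of `1/(1+aξ)`. -/
lemma geom_remainder_isBigO (a : ℂ) (N : ℕ) :
    (fun ξ : ℂ => 1 / (1 + a * ξ) - ∑ k ∈ Finset.range N, (-(a * ξ)) ^ k)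
      =O[nhds (0 : ℂ)] fun ξ : ℂ => ξ ^ N := by
  have hcont : ContinuousAt (fun ξ : ℂ => (-a) ^ N / (1 + a * ξ)) 0 := by
    apply ContinuousAt.div (by fun_prop) (by fun_prop)
    simp
  have hne : ∀ᶠ ξ : ℂ in nhds 0, 1 + a * ξ ≠ 0 := by
    have : ContinuousAt (fun ξ : ℂ => 1 + a * ξ) 0 := by fun_prop
    exact this.eventually_ne (by simp)
  have h := (hcont.isBigO_one ℂ).mul (isBigO_refl (fun ξ : ℂ => ξ ^ N) (nhds 0))
  simp only [one_mul] at h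
  refine h.congr' ?_ EventuallyEq.rfl
  filter_upwards [hne] with ξ hξ
  have hg := mul_neg_geom_sum (-(a * ξ)) N
  rw [sub_neg_eq_add] at hg
  field_simp
  rw [hg, neg_pow (a * ξ), neg_pow a, mul_pow]
  ring

/-- **Poles and residues of Padé approximants of an atomic Stieltjes function.**
For `f(ξ) = ∑ᵢ₌₁ⁿ λᵢ/(1+zᵢξ)` with `n ≥ 1`, positive weights `λᵢ` and distinct atoms
`zᵢ ∈ (0,1]`, and integers `1 ≤ M ≤ n`, `L - M + 1 ≥ 0`, there is an accuracy-through-order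
`[L/M]` Padé approximant of `f` of the form `T(ξ) + ∑ᵢ λ'ᵢ/(ξ - pᵢ)` with `deg T ≤ L - M`
(`T = 0` when `L = M - 1`), distinct real poles `pᵢ ∈ (-∞,-1]` and positive residues. -/
theorem pade_simple_poles_atomic
    (n : ℕ) (hn : 1 ≤ n) (z lam : Fin n → ℝ)
    (hz : ∀ i, z i ∈ Set.Ioc (0:ℝ) 1) (hzinj : Function.Injective z)
    (hlam : ∀ i, 0 < lam i)
    (L M : ℕ) (hM1 : 1 ≤ M) (hMn : M ≤ n) (hLM : M ≤ L + 1) :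
    ∃ (T : Polynomial ℝ) (p : Fin M → ℝ) (lam' : Fin M → ℝ),
      (L + 1 = M → T = 0) ∧
      T.natDegree ≤ L - M ∧
      Function.Injective p ∧
      (∀ i, p i ≤ -1) ∧
      (∀ i, 0 < lam' i) ∧
      (fun ξ : ℂ =>
          (∑ i, (lam i : ℂ) / (1 + (z i : ℂ) * ξ)) -
            (Polynomial.aeval ξ T + ∑ i, (lam' i : ℂ) / (ξ - (p i : ℂ))))
        =O[nhds (0 : ℂ)] fun ξ : ℂ => ξ ^ (L + M + 1) := by
  obtain ⟨s, hs⟩ : ∃ s, L + 1 = M + s := ⟨L + 1 - M, by omega⟩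
  obtain ⟨y, w, hyinj, hy, hw, hmom⟩ := exists_gauss_quadrature hMn z (fun i => lam i * z i ^ s)
    hz hzinj (fun i => mul_pos (hlam i) (pow_pos (hz i).1 _))
  let c : Fin M → ℝ := fun j => w j / y j ^ s
  have hc : ∀ j, 0 < c j := fun j => div_pos (hw j) (pow_pos (hy j).1 _)
  let d : ℕ → ℝ := fun k => ∑ i, lam i * z i ^ k - ∑ j, c j * y j ^ k
  have hd : ∀ k, s ≤ k → k < L + M + 1 → d k = 0 := by
    intro k h1 h2
    obtain ⟨m, rfl⟩ := Nat.exists_eq_add_of_le h1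
    have h := hmom m (by omega)
    rw [sub_eq_zero]
    convert h using 2 with i _ j _
    · ring
    · have := (pow_pos (hy j).1 s).ne'
      simp only [c]
      field_simp
      ring
  let T : ℝ[X] := ∑ k ∈ Finset.range s, C ((-1) ^ k * d k) * X ^ k
  refine ⟨T, fun j => -(y j)⁻¹, fun j => c j / y j, ?_, ?_, ?_, ?_, ?_, ?_⟩
  · intro h
    obtain rfl : s = 0 := by omega
    simp [T]
  · refine Polynomial.natDegree_sum_le_of_forall_le _ _ fun k hk => ?_
    have := Finset.mem_range.1 hk
    exact (Polynomial.natDegree_C_mul_X_pow_le _ _).trans (by omega)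
  · intro i j h
    exact hyinj (inv_injective (neg_injective h))
  · intro j
    exact neg_le_neg ((one_le_inv₀ (hy j).1).2 (hy j).2)
  · exact fun j => div_pos (hc j) (hy j).1
  · have h1 := IsBigO.sum (s := Finset.univ) fun i (_ : i ∈ Finset.univ) =>
      (geom_remainder_isBigO (z i) (L + M + 1)).const_mul_left (lam i : ℂ)
    have h2 := IsBigO.sum (s := Finset.univ) fun j (_ : j ∈ Finset.univ) =>
      (geom_remainder_isBigO (y j) (L + M + 1)).const_mul_left (c j : ℂ)
    refine (h1.sub h2).congr_left fun ξ => ?_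
    have hpole : ∀ j, ((c j / y j : ℝ) : ℂ) / (ξ - ((-(y j)⁻¹ : ℝ) : ℂ))
        = (c j : ℂ) * (1 / (1 + (y j : ℂ) * ξ)) := by
      intro j
      have hyj : (y j : ℂ) ≠ 0 := by exact_mod_cast (hy j).1.ne'
      push_cast
      rw [div_div, mul_one_div]
      congr 1
      field_simp
      ring
    -- The terms of index `≥ s` vanish by equality of moments; the others make up `T`.
    have hT : Polynomial.aeval ξ T = ∑ k ∈ Finset.range (L + M + 1), (d k : ℂ) * (-ξ) ^ k := by
      rw [← Finset.sum_subset (Finset.range_mono (show s ≤ L + M + 1 by omega))]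
      · simp only [T, map_sum, map_mul, Polynomial.aeval_C, map_pow, Polynomial.aeval_X]
        refine Finset.sum_congr rfl fun k _ => ?_
        rw [neg_pow ξ]
        simp
        ring
      · intro k hk1 hk2
        simp only [Finset.mem_range] at hk1 hk2
        rw [hd k (by omega) hk1]
        simp
    have hd' : ∑ k ∈ Finset.range (L + M + 1), (d k : ℂ) * (-ξ) ^ k
        = ∑ i, (lam i : ℂ) * ∑ k ∈ Finset.range (L + M + 1), (-((z i : ℂ) * ξ)) ^ k
          - ∑ j, (c j : ℂ) * ∑ k ∈ Finset.range (L + M + 1), (-((y j : ℂ) * ξ)) ^ k := by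
      simp only [Finset.mul_sum]
      rw [Finset.sum_comm, Finset.sum_comm (s := (Finset.univ : Finset (Fin M))),
        ← Finset.sum_sub_distrib]
      refine Finset.sum_congr rfl fun k _ => ?_
      simp only [d]
      push_cast
      rw [sub_mul, Finset.sum_mul, Finset.sum_mul]
      simp only [← mul_neg, mul_pow, mul_assoc]
    simp only [hpole]
    rw [hT, hd']
    simp only [Finset.sum_apply, mul_sub, Finset.sum_sub_distrib, mul_one_div]
    ring
end

section
/- Let μ be a finite positive Borel measure on [0,1] whose support contains at least M points of the half-open interval (0,1], where M ≥ 1, and let k ≥ 0 be an integer. Let μ_n := ∫_0^1 z^n dμ(z) and for real x define D(x) := det( (μ_{k+r+c} + x·μ_{k+r+c+1})_{r,c=0}^{M−1} ). Then (−1)^M · D(x) → +∞ as x → −∞. -/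
/-!
Write `A` and `B` for the `M × M` Hankel matrices of the moments starting at `μ_k` and `μ_{k+1}`,
so that `D(x) = det (A + x B)`. For `x ≠ 0`, `(-1)^M D(x) = (-x)^M det (x⁻¹ A + B)`; as `x → -∞`
the first factor tends to `+∞` (because `M ≥ 1`) and the second tends to `det B`. It remains to see
that `det B > 0`, i.e. that `B` is positive definite (`hankel_posDef`): its quadratic form is
`v ↦ ∫ z^(k+1) (∑ v_r z^r)² dμ`, and a nonzero polynomial of degree less than `M` cannot vanish at
all of the `M` support points in `(0,1]`, so the integrand is positive on a set of positive measure.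
-/

open MeasureTheory Matrix Filter

/-- A nonzero coefficient vector of length `M` gives a polynomial function which is nonzero at some
point of any set with at least `M` elements. -/
lemma exists_sum_pow_ne_zero {M : ℕ} {v : Fin M → ℝ} (hv : v ≠ 0) (S : Finset ℝ)
    (hS : M ≤ S.card) : ∃ s ∈ S, ∑ r : Fin M, v r * s ^ (r : ℕ) ≠ 0 := by
  by_contra! h
  have hp : (∑ r : Fin M, Polynomial.C (v r) * Polynomial.X ^ (r : ℕ)) = 0 := by
    refine Polynomial.eq_zero_of_degree_lt_of_eval_finset_eq_zero S ?_ ?_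
    · exact (Polynomial.degree_sum_fin_lt v).trans_le (by exact_mod_cast hS)
    · intro s hs
      simpa [Polynomial.eval_finsetSum] using h s hs
  apply hv
  ext i
  have := congrArg (fun p => Polynomial.coeff p (i : ℕ)) hp
  simpa [Polynomial.finsetSum_coeff, Polynomial.coeff_C_mul, Polynomial.coeff_X_pow,
    Fin.val_inj] using this

lemma integrableOn_Icc_of_continuous (μ : Measure ℝ) [IsFiniteMeasure μ] {f : ℝ → ℝ}
    (hf : Continuous f) : Integrable f (μ.restrict (Set.Icc (0:ℝ) 1)) :=
  hf.continuousOn.integrableOn_compact isCompact_Icc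

/-- The quadratic form of a Hankel moment matrix is the integral of a weighted square. -/
lemma hankel_quadratic_form (μ : Measure ℝ) [IsFiniteMeasure μ] (M k : ℕ) (v : Fin M → ℝ) :
    star v ⬝ᵥ ((Matrix.of fun r c : Fin M =>
      ∫ z in Set.Icc (0:ℝ) 1, z ^ (k + (r : ℕ) + (c : ℕ) + 1) ∂μ) *ᵥ v) =
    ∫ z in Set.Icc (0:ℝ) 1, z ^ (k + 1) * (∑ r : Fin M, v r * z ^ (r : ℕ)) ^ 2 ∂μ := by
  have hexp : ∀ z : ℝ, z ^ (k + 1) * (∑ r : Fin M, v r * z ^ (r : ℕ)) ^ 2 =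
      ∑ r : Fin M, ∑ c : Fin M, v r * (z ^ (k + (r : ℕ) + (c : ℕ) + 1) * v c) := by
    intro z
    rw [sq, Finset.sum_mul_sum, Finset.mul_sum]
    refine Finset.sum_congr rfl fun r _ => ?_
    rw [Finset.mul_sum]
    refine Finset.sum_congr rfl fun c _ => ?_
    ring
  simp_rw [hexp]
  rw [integral_finsetSum _ fun r _ => integrableOn_Icc_of_continuous μ (by fun_prop)]
  simp only [dotProduct, mulVec, Matrix.of_apply, Pi.star_apply, star_trivial]
  refine Finset.sum_congr rfl fun r _ => ?_
  rw [integral_finsetSum _ fun c _ => integrableOn_Icc_of_continuous μ (by fun_prop),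
    Finset.mul_sum]
  refine Finset.sum_congr rfl fun c _ => ?_
  rw [integral_const_mul, integral_mul_const]

/-- The shift by one in the exponent makes the weight `z ^ (k + 1)` vanish at `0`, which is why
the support points are required to be positive. -/
lemma hankel_posDef (μ : Measure ℝ) [IsFiniteMeasure μ] (hμsupp : μ (Set.Icc (0:ℝ) 1)ᶜ = 0)
    (M k : ℕ) (S : Finset ℝ) (hS : ↑S ⊆ measureSupport μ ∩ Set.Ioc (0:ℝ) 1) (hM : M ≤ S.card) :
    (Matrix.of fun r c : Fin M =>
      ∫ z in Set.Icc (0:ℝ) 1, z ^ (k + (r : ℕ) + (c : ℕ) + 1) ∂μ).PosDef := by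
  refine Matrix.PosDef.of_dotProduct_mulVec_pos ?_ fun v hv => ?_
  · ext r c
    simp only [Matrix.conjTranspose_apply, Matrix.of_apply, star_trivial]
    simp_rw [add_right_comm k (c : ℕ) (r : ℕ)]
  rw [hankel_quadratic_form]
  have hcont : Continuous fun z : ℝ => z ^ (k + 1) * (∑ r : Fin M, v r * z ^ (r : ℕ)) ^ 2 := by
    fun_prop
  have hnn : 0 ≤ᵐ[μ.restrict (Set.Icc (0:ℝ) 1)]
      fun z : ℝ => z ^ (k + 1) * (∑ r : Fin M, v r * z ^ (r : ℕ)) ^ 2 := by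
    filter_upwards [ae_restrict_mem measurableSet_Icc] with z hz
    exact mul_nonneg (pow_nonneg hz.1 _) (sq_nonneg _)
  rw [integral_pos_iff_support_of_nonneg_ae hnn (integrableOn_Icc_of_continuous μ hcont),
    Measure.restrict_eq_self_of_ae_mem (show ∀ᵐ z ∂μ, z ∈ Set.Icc (0:ℝ) 1 from hμsupp)]
  obtain ⟨s, hs, hne⟩ := exists_sum_pow_ne_zero hv S hM
  obtain ⟨hsupp, hpos⟩ := hS hs
  refine pos_iff_ne_zero.mpr (hsupp _ (hcont.isOpen_support.mem_nhds ?_))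
  exact mul_ne_zero (pow_ne_zero _ hpos.1.ne') (pow_ne_zero _ hne)

/-- **Asymptotics of the determinant `Δ_M(x)` as `x → -∞`.** Let `μ` be a finite positive
Borel measure on `[0,1]` whose support contains at least `M ≥ 1` points of `(0,1]`, let
`k ≥ 0`, and let `D(x)` be the determinant of the `M×M` matrix with entries
`μ_{k+r+c} + x·μ_{k+r+c+1}`, where `μ_n = ∫₀¹ zⁿ dμ(z)`. Then `(-1)^M · D(x) → +∞` as
`x → -∞`. -/
theorem det_perturbed_hankel_tendsto_atTop
    (μ : Measure ℝ) [IsFiniteMeasure μ] (hμsupp : μ (Set.Icc (0:ℝ) 1)ᶜ = 0)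
    (M : ℕ) (hM : 1 ≤ M) (k : ℕ)
    (hsupp : ∃ S : Finset ℝ,
        ↑S ⊆ measureSupport μ ∩ Set.Ioc (0:ℝ) 1 ∧ M ≤ S.card) :
    Filter.Tendsto
      (fun x : ℝ => (-1 : ℝ) ^ M *
        (Matrix.of fun r c : Fin M =>
          (∫ z in Set.Icc (0:ℝ) 1, z ^ (k + (r : ℕ) + (c : ℕ)) ∂μ) +
            x * ∫ z in Set.Icc (0:ℝ) 1, z ^ (k + (r : ℕ) + (c : ℕ) + 1) ∂μ).det)
      Filter.atBot Filter.atTop := by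
  obtain ⟨S, hS, hcard⟩ := hsupp
  set A : Matrix (Fin M) (Fin M) ℝ := Matrix.of fun r c =>
    ∫ z in Set.Icc (0:ℝ) 1, z ^ (k + (r : ℕ) + (c : ℕ)) ∂μ with hA
  set B : Matrix (Fin M) (Fin M) ℝ := Matrix.of fun r c =>
    ∫ z in Set.Icc (0:ℝ) 1, z ^ (k + (r : ℕ) + (c : ℕ) + 1) ∂μ with hB
  have hdet : 0 < B.det := (hankel_posDef μ hμsupp M k S hS hcard).det_pos
  have hlim : Tendsto (fun x : ℝ => (x⁻¹ • A + B).det) atBot (nhds B.det) := by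
    have hc : Continuous fun t : ℝ => (t • A + B).det := by fun_prop
    have h := (hc.tendsto 0).comp (tendsto_inv_atBot_zero (𝕜 := ℝ))
    simpa [Function.comp_def] using h
  have hpow : Tendsto (fun x : ℝ => (-x) ^ M) atBot atTop :=
    (tendsto_pow_atTop (by omega)).comp tendsto_neg_atBot_atTop
  refine (hpow.atTop_mul_pos hdet hlim).congr' ?_
  filter_upwards [eventually_lt_atBot (0:ℝ)] with x hx
  have hfac : (Matrix.of fun r c : Fin M =>
      (∫ z in Set.Icc (0:ℝ) 1, z ^ (k + (r : ℕ) + (c : ℕ)) ∂μ) +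
        x * ∫ z in Set.Icc (0:ℝ) 1, z ^ (k + (r : ℕ) + (c : ℕ) + 1) ∂μ) =
      x • (x⁻¹ • A + B) := by
    rw [smul_add, smul_inv_smul₀ hx.ne]
    rfl
  rw [hfac, Matrix.det_smul, Fintype.card_fin, neg_pow, mul_assoc]
end
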